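/- Let c>0 with 1/c an integer, and let ℓ ≥ 3/c + 3 be an integer. Then there exists ε>0 such that every ε-sparse, (ε|G|^{1-c}, ε|G|)-coherent graph G with |G|>1 has an induced cycle of length ℓ. -/

import Mathlib

noncomputable section

namespace PurePairs

open SimpleGraph

variable {V W : Type*}

/-- A pure pair in `G`: a pair of disjoint vertex sets that are complete
or anticomplete to each other. -/
def PurePair (G : SimpleGraph V) (A B : Set V) : Prop :=
  Disjoint A B ∧
    ((∀ a ∈ A, ∀ b ∈ B, G.Adj a b) ∨ (∀ a ∈ A, ∀ b ∈ B, ¬ G.Adj a b))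

/-- `G` contains `H`: some induced subgraph of `G` is isomorphic to `H`. -/
def Contains (G : SimpleGraph V) (H : SimpleGraph W) : Prop :=
  Nonempty (H ↪g G)

/-- The congestion of a graph `H`: the maximum (here: supremum, together with `0`)
of `1 - (|J|-1)/|E(J)|` over all subgraphs `J` of `H` with at least one edge.
If `H` has no edges this is `0`. -/
def congestion (H : SimpleGraph V) : ℝ :=
  sSup ({0} ∪ {x : ℝ | ∃ J : H.Subgraph, J.edgeSet.Nonempty ∧
    x = 1 - ((J.verts.ncard : ℝ) - 1) / (J.edgeSet.ncard : ℝ)})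

/-- `A` is anticomplete to `B`: no edges between them. -/
def Anticomplete (G : SimpleGraph V) (A B : Set V) : Prop :=
  ∀ a ∈ A, ∀ b ∈ B, ¬ G.Adj a b

/-- `A` covers `B`: every vertex of `B` has a neighbour in `A`. -/
def Covers (G : SimpleGraph V) (A B : Set V) : Prop :=
  ∀ b ∈ B, ∃ a ∈ A, G.Adj a b

/-- `G` is `ε`-sparse: every vertex has degree less than `ε|G|`. -/
def EpsSparse (G : SimpleGraph V) [Fintype V] (ε : ℝ) : Prop :=
  ∀ v : V, ((G.neighborSet v).ncard : ℝ) < ε * (Fintype.card V : ℝ)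

/-- `G` is `(γ,δ)`-coherent: there is no pair of disjoint anticomplete sets `A`, `B`
with `|A| ≥ γ` and `|B| ≥ δ`. -/
def Coherent (G : SimpleGraph V) (γ δ : ℝ) : Prop :=
  ¬ ∃ A B : Set V, Disjoint A B ∧ Anticomplete G A B ∧
      γ ≤ (A.ncard : ℝ) ∧ δ ≤ (B.ncard : ℝ)

/-- `N(X)`: the set of vertices with a neighbour in `X`. -/
def nbhd (G : SimpleGraph V) (X : Set V) : Set V :=
  {v | ∃ x ∈ X, G.Adj x v}

/-- A blockade: a family of nonempty pairwise disjoint vertex sets indexed by a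
finite set of integers. -/
def IsBlockade (I : Finset ℤ) (A : ℤ → Set V) : Prop :=
  (∀ i ∈ I, (A i).Nonempty) ∧
    ∀ i ∈ I, ∀ j ∈ I, i ≠ j → Disjoint (A i) (A j)

/-- The blockade `(A i : i ∈ I)` is `(γ,δ)`-divergent. -/
def Divergent (G : SimpleGraph V) (I : Finset ℤ) (A : ℤ → Set V) (γ δ : ℝ) : Prop :=
  ∃ i ∈ I, ∃ j ∈ I, i ≠ j ∧ ∃ X ⊆ A i, ∃ Y ⊆ A j,
    γ * ((A i).ncard : ℝ) ≤ (X.ncard : ℝ) ∧ δ * ((A j).ncard : ℝ) ≤ (Y.ncard : ℝ) ∧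
    Anticomplete G X Y

/-- The blockade `(A i : i ∈ I)` is `τ`-expanding. -/
def Expanding (G : SimpleGraph V) (I : Finset ℤ) (A : ℤ → Set V) (τ : ℝ) : Prop :=
  ∀ i ∈ I, ∀ j ∈ I, i ≠ j → ∀ X ⊆ A i,
    min (τ * (X.ncard : ℝ) / ((A i).ncard : ℝ)) (1/4)
      ≤ (((nbhd G X) ∩ A j).ncard : ℝ) / ((A j).ncard : ℝ)

/-- The linkage of the blockade `(A i : i ∈ I)` is at most `lam`. -/
def LinkageLE (G : SimpleGraph V) (I : Finset ℤ) (A : ℤ → Set V) (lam : ℝ) : Prop :=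
  ∀ i ∈ I, ∀ j ∈ I, i ≠ j → ∀ v ∈ A i,
    ((G.neighborSet v ∩ A j).ncard : ℝ) ≤ lam * ((A j).ncard : ℝ)

/-- The shrinkage of the blockade `(A i : i ∈ I)` is at most `σ`, i.e. its width is at
least `|G|^{1-σ}`. -/
def ShrinkageLE [Fintype V] (I : Finset ℤ) (A : ℤ → Set V) (σ : ℝ) : Prop :=
  ∀ i ∈ I, (Fintype.card V : ℝ) ^ (1 - σ) ≤ ((A i).ncard : ℝ)

/-- `(L 0, …, L k)` is a levelling in `G`. -/
def IsLevelling (G : SimpleGraph V) (L : ℕ → Set V) (k : ℕ) : Prop :=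
  1 ≤ k ∧ (L 0).ncard = 1 ∧
  (∀ i ≤ k, ∀ j ≤ k, i ≠ j → Disjoint (L i) (L j)) ∧
  (∀ i, 1 ≤ i → i ≤ k → Covers G (L (i-1)) (L i)) ∧
  (∀ i, 2 ≤ i → i ≤ k → ∀ h, h + 2 ≤ i → Anticomplete G (L h) (L i))

/-- The levelling `(L 0, …, L k)` reaches `C`, i.e. `(L 0, …, L k, C)` is a levelling. -/
def Reaches (G : SimpleGraph V) (L : ℕ → Set V) (k : ℕ) (C : Set V) : Prop :=
  IsLevelling G (fun i => if i = k + 1 then C else L i) (k + 1)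

/-- The levelling `(L 0, …, L k)` is `(B i : i ∈ I)`-rainbow. -/
def RainbowLevelling (I : Finset ℤ) (B : ℤ → Set V) (L : ℕ → Set V) (k : ℕ) : Prop :=
  ∃ q : ℕ → ℤ, (∀ i ≤ k, q i ∈ I ∧ L i ⊆ B (q i)) ∧
    ∀ i ≤ k, ∀ j ≤ k, q i = q j → i = j

/-- The levelling `(L 0, …, L k)` grades the blockade `(C j : j ∈ J)` (in some order). -/
def Grades (G : SimpleGraph V) (L : ℕ → Set V) (k : ℕ) (J : Finset ℤ) (C : ℤ → Set V) :
    Prop :=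
  Reaches G L k (⋃ j ∈ J, C j) ∧
  ∃ e : ℕ → ℤ, (∀ g < J.card, e g ∈ J) ∧
    (∀ g < J.card, ∀ h < J.card, e g = e h → g = h) ∧
    ∀ g < J.card, ∃ Y ⊆ L k,
      (∀ h, g ≤ h → h < J.card → Covers G Y (C (e h))) ∧
      (∀ h, h < g → Anticomplete G Y (C (e h)))

/-- The levelling `(L 0, …, L k)` grades the blockade `(C j : j ∈ J)` forwards. -/
def GradesFwd (G : SimpleGraph V) (L : ℕ → Set V) (k : ℕ) (J : Finset ℤ) (C : ℤ → Set V) :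
    Prop :=
  Reaches G L k (⋃ j ∈ J, C j) ∧
  ∀ j ∈ J, ∃ Y ⊆ L k,
    (∀ i ∈ J, j ≤ i → Covers G Y (C i)) ∧
    (∀ i ∈ J, i < j → Anticomplete G Y (C i))

/-- The levelling `(L 0, …, L k)` grades the blockade `(C j : j ∈ J)` backwards. -/
def GradesBwd (G : SimpleGraph V) (L : ℕ → Set V) (k : ℕ) (J : Finset ℤ) (C : ℤ → Set V) :
    Prop :=
  Reaches G L k (⋃ j ∈ J, C j) ∧
  ∀ j ∈ J, ∃ Y ⊆ L k,
    (∀ i ∈ J, i ≤ j → Covers G Y (C i)) ∧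
    (∀ i ∈ J, j < i → Anticomplete G Y (C i))

/-- Two levellings are parallel. -/
def Parallel (G : SimpleGraph V) (L : ℕ → Set V) (k : ℕ) (M : ℕ → Set V) (m : ℕ) : Prop :=
  L 0 = M 0 ∧
  Disjoint (⋃ j ∈ Finset.Icc 1 m, M j) (⋃ i ∈ Finset.Icc 1 k, L i) ∧
  Anticomplete G (⋃ j ∈ Finset.Icc 1 m, M j) (⋃ i ∈ Finset.Icc 1 k, L i)

/-- `(L, M, C)` is a bi-levelling, where `L` has height `k` and `M` has height `m`:
`C` is a blockade, `L, M` are parallel levellings both reaching the union of the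
blocks of `C`, and `L` grades `C` forwards. Its height is `k + m` and its length is
the length of `C`. -/
def IsBiLevelling (G : SimpleGraph V) (L : ℕ → Set V) (k : ℕ) (M : ℕ → Set V) (m : ℕ)
    (J : Finset ℤ) (C : ℤ → Set V) : Prop :=
  IsBlockade J C ∧ IsLevelling G L k ∧ IsLevelling G M m ∧ Parallel G L k M m ∧
    Reaches G M m (⋃ j ∈ J, C j) ∧ GradesFwd G L k J C

/-- A bi-grading: a bi-levelling in which `M` also grades `C` backwards. -/
def IsBiGrading (G : SimpleGraph V) (L : ℕ → Set V) (k : ℕ) (M : ℕ → Set V) (m : ℕ)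
    (J : Finset ℤ) (C : ℤ → Set V) : Prop :=
  IsBiLevelling G L k M m J C ∧ GradesBwd G M m J C

/-- The bi-levelling `(L, M, C)` is `(A i : i ∈ I)`-rainbow: each block of `C`, each
level of `L`, and each level of `M` other than `M 0 = L 0` is included in a block of
`A`, and distinct such sets lie in distinct blocks. -/
def RainbowBiLevelling (I : Finset ℤ) (A : ℤ → Set V)
    (L : ℕ → Set V) (k : ℕ) (M : ℕ → Set V) (m : ℕ)
    (J : Finset ℤ) (C : ℤ → Set V) : Prop :=
  ∃ (qc : ℤ → ℤ) (ql qm : ℕ → ℤ),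
    (∀ j ∈ J, qc j ∈ I ∧ C j ⊆ A (qc j)) ∧
    (∀ i ≤ k, ql i ∈ I ∧ L i ⊆ A (ql i)) ∧
    (∀ i, 1 ≤ i → i ≤ m → qm i ∈ I ∧ M i ⊆ A (qm i)) ∧
    (∀ j ∈ J, ∀ j' ∈ J, qc j = qc j' → j = j') ∧
    (∀ i ≤ k, ∀ i' ≤ k, ql i = ql i' → i = i') ∧
    (∀ i, 1 ≤ i → i ≤ m → ∀ i', 1 ≤ i' → i' ≤ m → qm i = qm i' → i = i') ∧
    (∀ j ∈ J, ∀ i ≤ k, qc j ≠ ql i) ∧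
    (∀ j ∈ J, ∀ i, 1 ≤ i → i ≤ m → qc j ≠ qm i) ∧
    (∀ i ≤ k, ∀ i', 1 ≤ i' → i' ≤ m → ql i ≠ qm i')

/-- Each block of `(C j : j ∈ J)` lies in a block of `(A i : i ∈ I)`; the `A`-size of
`C` is at least `η` when every block of `C` has size at least `η` times the size of the
block of `A` containing it. -/
def SizeGE (I : Finset ℤ) (A : ℤ → Set V) (J : Finset ℤ) (C : ℤ → Set V) (η : ℝ) : Prop :=
  ∀ j ∈ J, ∀ i ∈ I, C j ⊆ A i → η * ((A i).ncard : ℝ) ≤ ((C j).ncard : ℝ)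

/-- A `(B i : i ∈ I)`-rainbow induced path `p 0 - p 1 - ⋯ - p n` in `G`. -/
def RainbowPath (G : SimpleGraph V) (I : Finset ℤ) (B : ℤ → Set V)
    (n : ℕ) (p : ℕ → V) : Prop :=
  (∀ i ≤ n, ∀ j ≤ n, p i = p j → i = j) ∧
  (∀ i < n, G.Adj (p i) (p (i+1))) ∧
  (∀ i j, i + 1 < j → j ≤ n → ¬ G.Adj (p i) (p j)) ∧
  ∃ q : ℕ → ℤ, (∀ i ≤ n, q i ∈ I ∧ p i ∈ B (q i)) ∧
    ∀ i ≤ n, ∀ j ≤ n, q i = q j → i = j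

/-- A `(B i : i ∈ I)`-rainbow copy of `H` in `G`: an induced copy of `H` with each
vertex in a different block. -/
def RainbowCopy (G : SimpleGraph V) (I : Finset ℤ) (B : ℤ → Set V)
    (H : SimpleGraph W) : Prop :=
  ∃ (f : H ↪g G) (q : W → ℤ), Function.Injective q ∧ ∀ w : W, q w ∈ I ∧ f w ∈ B (q w)

/-- `(N,K,σ,lam,c)` forces `H`. -/
def Forces (H : SimpleGraph W) (N K : ℕ) (σ lam c : ℝ) : Prop :=
  ∀ {V : Type} [Fintype V] (G : SimpleGraph V),
    Coherent G ((Fintype.card V : ℝ) ^ (1 - c)) ((Fintype.card V : ℝ) ^ (1 - c)) →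
    N ≤ Fintype.card V →
    ∀ (I : Finset ℤ) (A : ℤ → Set V), IsBlockade I A → I.card = K →
      ShrinkageLE I A σ → LinkageLE G I A lam →
      RainbowCopy G I A H

/-- `p 0 - ⋯ - p n` is a handle of length `n` that can be added to (the graph induced
on) `S` inside the ambient graph `H`: an induced path of `H[S ∪ p]` of length at least
two whose ends lie in `S`, whose internal vertices avoid `S` and have degree two in
`H[S ∪ p]`. -/
def IsHandle (H : SimpleGraph V) (S : Set V) (n : ℕ) (p : ℕ → V) : Prop :=
  2 ≤ n ∧
  (∀ i ≤ n, ∀ j ≤ n, p i = p j → i = j) ∧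
  p 0 ∈ S ∧ p n ∈ S ∧
  (∀ i, 0 < i → i < n → p i ∉ S) ∧
  (∀ i < n, H.Adj (p i) (p (i+1))) ∧
  (∀ i j, i + 1 < j → j ≤ n → ¬ H.Adj (p i) (p j)) ∧
  (∀ i, 0 < i → i < n → ∀ w, (w ∈ S ∨ ∃ j ≤ n, w = p j) → H.Adj (p i) w →
    w = p (i-1) ∨ w = p (i+1))

/-- The vertex sets `S` such that the induced subgraph `H[S]` can be built, starting
from the two-vertex graph with no edges, by repeatedly adding handles of length at
least `β`. -/
inductive BuildableOn (H : SimpleGraph V) (β : ℕ) : Set V → Prop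
  | base (u v : V) (huv : u ≠ v) (hadj : ¬ H.Adj u v) : BuildableOn H β {u, v}
  | handle (S : Set V) (n : ℕ) (p : ℕ → V) (hS : BuildableOn H β S)
      (hh : IsHandle H S n p) (hn : β ≤ n) :
      BuildableOn H β (S ∪ {w | ∃ j ≤ n, w = p j})

/-- `H` is `β`-buildable. -/
def Buildable [Fintype V] (H : SimpleGraph V) (β : ℕ) : Prop :=
  BuildableOn H β Set.univ

/-- The vertex sets `S` such that the induced subgraph `H[S]` can be built, starting
from the null graph, by repeatedly adding a subleaf or a handle of length at least
`β`. -/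
inductive WeaklyBuildableOn (H : SimpleGraph V) (β : ℕ) : Set V → Prop
  | empty : WeaklyBuildableOn H β ∅
  | subleaf (S : Set V) (v : V) (hv : v ∉ S) (hdeg : (S ∩ H.neighborSet v).ncard ≤ 1)
      (hS : WeaklyBuildableOn H β S) : WeaklyBuildableOn H β (insert v S)
  | handle (S : Set V) (n : ℕ) (p : ℕ → V) (hS : WeaklyBuildableOn H β S)
      (hh : IsHandle H S n p) (hn : β ≤ n) :
      WeaklyBuildableOn H β (S ∪ {w | ∃ j ≤ n, w = p j})

/-- `H` is weakly `β`-buildable. -/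
def WeaklyBuildable [Fintype V] (H : SimpleGraph V) (β : ℕ) : Prop :=
  WeaklyBuildableOn H β Set.univ

open scoped Classical in
/-- Finset version of the neighbourhood of a set. -/
def nb {α : Type*} [Fintype α] (G : SimpleGraph α) (B : Finset α) : Finset α :=
  Finset.univ.filter (fun v => ∃ b ∈ B, G.Adj b v)

section helpers
open scoped Classical
variable {α : Type*} [Fintype α] {G : SimpleGraph α}

lemma mem_nb {B : Finset α} {v : α} : v ∈ nb G B ↔ ∃ b ∈ B, G.Adj b v := by
  simp [nb]

lemma nb_mono {A B : Finset α} (h : A ⊆ B) : nb G A ⊆ nb G B := by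
  intro v hv
  rw [mem_nb] at *
  obtain ⟨b, hb, hv⟩ := hv
  exact ⟨b, h hb, hv⟩

lemma nb_union {A B : Finset α} : nb G (A ∪ B) = nb G A ∪ nb G B := by
  ext v
  simp only [mem_nb, Finset.mem_union]
  constructor
  · rintro ⟨b, hb | hb, h⟩
    · exact Or.inl ⟨b, hb, h⟩
    · exact Or.inr ⟨b, hb, h⟩
  · rintro (⟨b, hb, h⟩ | ⟨b, hb, h⟩)
    · exact ⟨b, Or.inl hb, h⟩
    · exact ⟨b, Or.inr hb, h⟩

lemma nb_empty : nb G (∅ : Finset α) = ∅ := by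
  ext v
  simp [mem_nb]

/-- The number of neighbours of `B` in `W` is subadditive in `B`. -/
lemma card_nb_union_le (A B W : Finset α) :
    (((nb G (A ∪ B)) ∩ W).card : ℝ) ≤ ((nb G A ∩ W).card : ℝ) + ((nb G B ∩ W).card : ℝ) := by
  rw [nb_union, Finset.union_inter_distrib_right]
  exact_mod_cast Finset.card_union_le _ _

/-- The chain lemma: if light sets never see much of the next group, then sets that are not
light on the `g`-th group have at least `D ^ g` elements. -/
lemma chain (Wc : ℕ → Finset α) (Γ : ℕ → Finset ℕ) (B : Finset α) (w γ D : ℝ)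
    (hγ : 0 < γ) (hD : 1 ≤ D) (hw : γ + 2 * γ * D ≤ w)
    (hs : ∀ v a, ((nb G {v} ∩ Wc a).card : ℝ) ≤ w) (L : ℕ)
    (hfail : ∀ g < L, ∀ B' ⊆ B, (∀ a ∈ Γ g, ((nb G B' ∩ Wc a).card : ℝ) ≤ w) →
      ∀ b ∈ Γ (g + 1), ((nb G B' ∩ Wc b).card : ℝ) < γ) :
    ∀ g ≤ L, ∀ B' ⊆ B, (∃ a ∈ Γ g, w < ((nb G B' ∩ Wc a).card : ℝ)) →
      D ^ g ≤ (B'.card : ℝ) := by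
  have hw0 : 0 ≤ w := by nlinarith
  intro g
  induction g with
  | zero =>
    rintro - B' - ⟨a, -, ha⟩
    rcases B'.eq_empty_or_nonempty with h | h
    · subst h
      rw [nb_empty] at ha
      simp at ha
      linarith
    · simpa using h.card_pos
  | succ g ih =>
    rintro hg B' hB' ⟨b, hb, hbw⟩
    have hDg : 0 < D ^ g := by positivity
    have key : ∀ N : ℕ, ∀ B'' ⊆ B, B''.card = N →
        ((nb G B'' ∩ Wc b).card : ℝ) * D ^ g ≤ γ * D ^ g + 2 * γ * (B''.card : ℝ) := by
      intro N
      induction N using Nat.strong_induction_on with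
      | _ N ihN =>
        intro B'' hB'' hN
        by_cases hl : ∀ a ∈ Γ g, ((nb G B'' ∩ Wc a).card : ℝ) ≤ w
        · have := hfail g hg B'' hB'' hl b hb
          have h2 : 0 ≤ 2 * γ * (B''.card : ℝ) := by positivity
          nlinarith
        · -- a minimal non-light subset
          have hne : (B''.powerset.filter
              (fun M => ¬ ∀ a ∈ Γ g, ((nb G M ∩ Wc a).card : ℝ) ≤ w)).Nonempty :=
            ⟨B'', by simp only [Finset.mem_filter, Finset.mem_powerset]; exact ⟨subset_rfl, hl⟩⟩
          obtain ⟨M, hM, hmin⟩ := Finset.exists_min_image _ Finset.card hne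
          simp only [Finset.mem_filter, Finset.mem_powerset] at hM hmin
          obtain ⟨hMB, hMh⟩ := hM
          have hMB' : M ⊆ B := hMB.trans hB''
          have hMne : M.Nonempty := by
            rcases M.eq_empty_or_nonempty with h | h
            · exfalso
              apply hMh
              intro a _
              rw [h, nb_empty]
              simpa using hw0
            · exact h
          obtain ⟨v, hv⟩ := hMne
          have hlight1 : ∀ a ∈ Γ g, ((nb G (M.erase v) ∩ Wc a).card : ℝ) ≤ w := by
            by_contra hcon
            have := hmin (M.erase v) ⟨(Finset.erase_subset _ _).trans hMB, hcon⟩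
            have h3 := Finset.card_erase_lt_of_mem hv
            omega
          have h1 := hfail g hg (M.erase v) ((Finset.erase_subset _ _).trans hMB') hlight1 b hb
          have h2 := hfail g hg {v} (by simpa using hMB' hv) (fun a _ => hs v a) b hb
          have hMeq : M = M.erase v ∪ {v} := by
            ext x
            simp only [Finset.mem_union, Finset.mem_erase, Finset.mem_singleton]
            constructor
            · intro hx
              by_cases hxv : x = v
              · exact Or.inr hxv
              · exact Or.inl ⟨hxv, hx⟩
            · rintro (⟨-, h⟩ | h)
              · exact h
              · exact h ▸ hv
          have h3 : ((nb G M ∩ Wc b).card : ℝ) ≤ 2 * γ := by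
            have := card_nb_union_le (G := G) (M.erase v) {v} (Wc b)
            rw [← hMeq] at this
            linarith
          have h4 : D ^ g ≤ (M.card : ℝ) := by
            apply ih (by omega) M hMB'
            push Not at hMh
            exact hMh
          have h5 : (B'' \ M).card + M.card = B''.card := Finset.card_sdiff_add_card_eq_card hMB
          have hMpos : 0 < M.card := Finset.card_pos.mpr ⟨v, hv⟩
          have h6 := ihN (B'' \ M).card (by omega) (B'' \ M)
            (Finset.sdiff_subset.trans hB'') rfl
          have h7 := card_nb_union_le (G := G) (B'' \ M) M (Wc b)
          rw [Finset.sdiff_union_of_subset hMB] at h7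
          have h8 : ((B'' \ M).card : ℝ) + M.card = B''.card := by exact_mod_cast h5
          nlinarith
    have := key _ B' hB' rfl
    have h9 : w * D ^ g < γ * D ^ g + 2 * γ * (B'.card : ℝ) := by nlinarith
    have h10 : (γ + 2 * γ * D) * D ^ g ≤ w * D ^ g := by nlinarith
    have h11 : 2 * γ * (D * D ^ g) < 2 * γ * (B'.card : ℝ) := by nlinarith
    rw [pow_succ]
    have := lt_of_mul_lt_mul_left h11 (by positivity)
    linarith

/-- The cleaning lemma. -/
lemma cleaning (m : ℕ) (γ e t z : ℝ) (hγ : 0 < γ) (ht : 0 ≤ t) (hte : t * γ = e) (htγ : γ ≤ e)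
    (hco : ∀ A B : Finset α, Disjoint A B → (∀ a ∈ A, ∀ b ∈ B, ¬ G.Adj a b) →
      γ ≤ (A.card : ℝ) → (B.card : ℝ) < e)
    (U Z : Finset α) (hZ : z ≤ (Z.card : ℝ)) (hz : (2 * m + 3) * e ≤ z) :
    ∃ X ⊆ U, (X.card : ℝ) < γ ∧ ∀ Y ⊆ U \ X, Y.Nonempty → (Y.card : ℝ) ≤ m * γ →
      t * (Y.card : ℝ) ≤ (((nb G Y ∩ Z) \ (X ∪ Y)).card : ℝ) := by
  let fam := U.powerset.filter (fun X => (X.card : ℝ) ≤ (m + 1) * γ ∧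
    (((nb G X ∩ Z) \ X).card : ℝ) ≤ t * (X.card : ℝ))
  have hne : fam.Nonempty := ⟨∅, by
    simp only [fam, Finset.mem_filter, Finset.mem_powerset]
    refine ⟨by simp, by simp; positivity, by simp [nb_empty]⟩⟩
  obtain ⟨X, hX, hmax⟩ := Finset.exists_max_image _ Finset.card hne
  simp only [fam, Finset.mem_filter, Finset.mem_powerset] at hX hmax
  obtain ⟨hXU, hXc, hXn⟩ := hX
  have hXγ : (X.card : ℝ) < γ := by
    by_contra hcon
    push Not at hcon
    have h1 := hco X ((Z \ X) \ nb G X)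
      (by
        rw [Finset.disjoint_left]
        intro a ha hb
        simp only [Finset.mem_sdiff] at hb
        exact hb.1.2 ha)
      (by
        intro a ha b hb hab
        simp only [Finset.mem_sdiff] at hb
        exact hb.2 (mem_nb.mpr ⟨a, ha, hab⟩)) hcon
    have h2 : Z ⊆ X ∪ (((Z \ X) \ nb G X) ∪ ((nb G X ∩ Z) \ X)) := by
      intro v hv
      simp only [Finset.mem_union, Finset.mem_sdiff, Finset.mem_inter]
      tauto
    have h3 := Finset.card_le_card h2
    have h4 := Finset.card_union_le X (((Z \ X) \ nb G X) ∪ ((nb G X ∩ Z) \ X))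
    have h5 := Finset.card_union_le ((Z \ X) \ nb G X) ((nb G X ∩ Z) \ X)
    have h6 : (Z.card : ℝ) ≤ X.card + ((((Z \ X) \ nb G X).card : ℝ) +
        (((nb G X ∩ Z) \ X).card : ℝ)) := by
      have : Z.card ≤ X.card + (((Z \ X) \ nb G X).card + ((nb G X ∩ Z) \ X).card) := by omega
      exact_mod_cast this
    have h7 : t * (X.card : ℝ) ≤ t * ((m + 1) * γ) := mul_le_mul_of_nonneg_left hXc ht
    have h8 : t * ((m + 1) * γ) = (m + 1) * e := by rw [← hte]; ring
    have h9 : ((m : ℝ) + 1) * γ ≤ (m + 1) * e := by gcongr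
    nlinarith
  refine ⟨X, hXU, hXγ, ?_⟩
  intro Y hY hYne hYc
  by_contra hcon
  push Not at hcon
  have hdis : Disjoint X Y := by
    rw [Finset.disjoint_left]
    intro a ha hb
    have := hY hb
    simp only [Finset.mem_sdiff] at this
    exact this.2 ha
  have hc : (X ∪ Y).card = X.card + Y.card := Finset.card_union_of_disjoint hdis
  have hc' : ((X ∪ Y).card : ℝ) = X.card + Y.card := by exact_mod_cast hc
  have hsub : (nb G (X ∪ Y) ∩ Z) \ (X ∪ Y) ⊆
      ((nb G X ∩ Z) \ X) ∪ ((nb G Y ∩ Z) \ (X ∪ Y)) := by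
    intro v hv
    rw [nb_union] at hv
    simp only [Finset.mem_union, Finset.mem_sdiff, Finset.mem_inter] at *
    tauto
  have h1 : (((nb G (X ∪ Y) ∩ Z) \ (X ∪ Y)).card : ℝ) ≤
      (((nb G X ∩ Z) \ X).card : ℝ) + (((nb G Y ∩ Z) \ (X ∪ Y)).card : ℝ) := by
    exact_mod_cast (Finset.card_le_card hsub).trans (Finset.card_union_le _ _)
  have := hmax (X ∪ Y) ⟨Finset.union_subset hXU (hY.trans Finset.sdiff_subset), by
    rw [hc']; nlinarith, by rw [hc']; nlinarith⟩
  have := hYne.card_pos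
  omega

end helpers

section paths
set_option linter.unusedSectionVars false
open scoped Classical
variable {α : Type*} [Fintype α] {G : SimpleGraph α}

/-- Every vertex of `B` is the end of an induced path of length `i` from `y` inside `Om`, all of
whose vertices except the last have no neighbours in `N`. -/
def RP (G : SimpleGraph α) (y : α) (i : ℕ) (B : Finset α) (Om N : Set α) : Prop :=
  ∀ β ∈ B, ∃ p : ℕ → α, p 0 = y ∧ p i = β ∧ (∀ g < i, G.Adj (p g) (p (g + 1))) ∧
    (∀ g g', g + 1 < g' → g' ≤ i → ¬ G.Adj (p g) (p g')) ∧
    (∀ g g', g < g' → g' ≤ i → p g ≠ p g') ∧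
    (∀ g ≤ i, p g ∈ Om) ∧ ∀ g < i, ∀ v ∈ N, ¬ G.Adj (p g) v

lemma RP.mono {y : α} {i : ℕ} {B : Finset α} {Om N N' : Set α} (h : RP G y i B Om N)
    (hN : N' ⊆ N) : RP G y i B Om N' := by
  intro β hβ
  obtain ⟨p, h1, h2, h3, h4, h5, h6, h7⟩ := h β hβ
  exact ⟨p, h1, h2, h3, h4, h5, h6, fun g hg v hv => h7 g hg v (hN hv)⟩

lemma RP.ext {y : α} {i : ℕ} {B B' E : Finset α} {Om N N' : Set α} (h : RP G y i B Om N)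
    (hB : B' ⊆ B) (hd : Disjoint Om N) (hE : E ⊆ nb G B') (hEN : ∀ v ∈ E, v ∈ N)
    (hN : N' ⊆ N) (hN' : ∀ v ∈ N', v ∉ nb G B') :
    RP G y (i + 1) E (Om ∪ {v | v ∈ E}) N' := by
  intro v hv
  obtain ⟨β, hβ, hβv⟩ := mem_nb.mp (hE hv)
  obtain ⟨p, h1, h2, h3, h4, h5, h6, h7⟩ := h β (hB hβ)
  have hvO : v ∉ Om := fun hh => Set.disjoint_left.mp hd hh (hEN v hv)
  refine ⟨fun g => if g ≤ i then p g else v, by simp [h1], by simp, ?_, ?_, ?_, ?_, ?_⟩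
  · intro g hg
    by_cases hgi : g + 1 ≤ i
    · simpa [hgi, show g ≤ i by omega] using h3 g (by omega)
    · have : g = i := by omega
      subst this
      simpa [h2] using hβv
  · intro g g' hg hg'
    by_cases hgi : g' ≤ i
    · simpa [hgi, show g ≤ i by omega] using h4 g g' hg hgi
    · simpa [hgi, show g ≤ i by omega] using h7 g (by omega) v (hEN v hv)
  · intro g g' hg hg'
    by_cases hgi : g' ≤ i
    · simpa [hgi, show g ≤ i by omega] using h5 g g' hg hgi
    · simp only [hgi, show g ≤ i by omega, if_true, if_false]
      intro hh
      exact hvO (hh ▸ h6 g (by omega))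
  · intro g hg
    by_cases hgi : g ≤ i
    · simpa [hgi] using Or.inl (h6 g hgi)
    · simpa [hgi] using Or.inr hv
  · intro g hg x hx
    simp only [show g ≤ i by omega, if_true]
    by_cases hgi : g = i
    · subst hgi
      intro hh
      apply hN' x hx
      rw [mem_nb]
      exact ⟨β, hβ, h2 ▸ hh⟩
    · exact h7 g (by omega) x (hN hx)

/-- The union of the targets with index in `[u, v)`. -/
def Un (Wc : ℕ → Finset α) (u v : ℕ) : Set α := {x | ∃ a, u ≤ a ∧ a < v ∧ x ∈ Wc a}

/-- The conclusion of the path lemmas: an induced path of length `h` to one of the targets. -/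
def Concl (G : SimpleGraph α) (y : α) (h : ℕ) (Om : Set α) (Wc : ℕ → Finset α) (lo hi : ℕ) :
    Prop :=
  ∃ a, lo ≤ a ∧ a < hi ∧ ∃ (p : ℕ → α) (z : α), p 0 = y ∧
    (∀ g < h, G.Adj (p g) (p (g + 1))) ∧
    (∀ g g', g + 1 < g' → g' ≤ h → ¬ G.Adj (p g) (p g')) ∧
    (∀ g g', g < g' → g' ≤ h → p g ≠ p g') ∧
    (∀ g ≤ h, p g ∈ Om ∨ ∃ b, a < b ∧ b < hi ∧ p g ∈ Wc b) ∧
    z ∈ Wc a ∧ G.Adj (p h) z ∧ ∀ g < h, ¬ G.Adj (p g) z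

lemma Concl.mono {y : α} {h : ℕ} {Om Om' : Set α} {Wc Wc' : ℕ → Finset α} {lo hi lo' hi' : ℕ}
    (hc : Concl G y h Om Wc lo hi) (hlo : lo' ≤ lo) (hhi : hi ≤ hi')
    (hW : ∀ a, Wc a ⊆ Wc' a)
    (hO : ∀ x ∈ Om, x ∈ Om' ∨ ∃ b, hi ≤ b ∧ b < hi' ∧ x ∈ Wc' b) :
    Concl G y h Om' Wc' lo' hi' := by
  obtain ⟨a, ha1, ha2, p, z, h1, h2, h3, h4, h5, h6, h7, h8⟩ := hc
  refine ⟨a, by omega, by omega, p, z, h1, h2, h3, h4, ?_, hW a h6, h7, h8⟩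
  intro g hg
  rcases h5 g hg with h | ⟨b, hb1, hb2, hb3⟩
  · rcases hO _ h with h | ⟨b, hb1, hb2, hb3⟩
    · exact Or.inl h
    · exact Or.inr ⟨b, by omega, hb2, hb3⟩
  · exact Or.inr ⟨b, hb1, by omega, hW b hb3⟩

/-- The standing hypotheses on the graph and parameters. -/
structure Setup (G : SimpleGraph α) (m : ℕ) (γ e t : ℝ) : Prop where
  hγ : 0 < γ
  ht : 1 ≤ t
  hte : t * γ = e
  htm : t ^ m = (Fintype.card α : ℝ)
  hm : 1 ≤ m
  hn : 0 < Fintype.card α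
  hco : ∀ A B : Finset α, Disjoint A B → (∀ a ∈ A, ∀ b ∈ B, ¬ G.Adj a b) →
      γ ≤ (A.card : ℝ) → (B.card : ℝ) < e
  hs : ∀ v, ((nb G {v}).card : ℝ) ≤ e
  hγt : γ ≤ t ^ (m - 1)

lemma Setup.hγe {m : ℕ} {γ e t : ℝ} (S : Setup G m γ e t) : γ ≤ e := by
  have := S.hγ
  have := S.ht
  rw [← S.hte]
  nlinarith

/-- Coherence: a large set covers almost everything. -/
lemma Setup.cover {m : ℕ} {γ e t : ℝ} (S : Setup G m γ e t) (B W : Finset α) (hB : γ ≤ (B.card : ℝ))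
    (hd : Disjoint B W) : (W.card : ℝ) - e < ((nb G B ∩ W).card : ℝ) := by
  have h1 := S.hco B (W \ nb G B) (hd.mono_right Finset.sdiff_subset) (by
    intro a ha b hb hab
    exact (Finset.mem_sdiff.mp hb).2 (mem_nb.mpr ⟨a, ha, hab⟩)) hB
  have h2 : (W \ nb G B).card + (nb G B ∩ W).card = W.card := by
    rw [Finset.inter_comm]
    exact Finset.card_sdiff_add_card_inter W (nb G B)
  have h3 : ((W \ nb G B).card : ℝ) + ((nb G B ∩ W).card : ℝ) = W.card := by exact_mod_cast h2
  linarith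

lemma Setup.step {m : ℕ} {γ e t : ℝ} (S : Setup G m γ e t) (Wc : ℕ → Finset α) (Γ : ℕ → Finset ℕ)
    (B : Finset α) (hheavy : ∃ a ∈ Γ m, 5 * e < ((nb G B ∩ Wc a).card : ℝ)) :
    ∃ g < m, ∃ B' ⊆ B, (∀ a ∈ Γ g, ((nb G B' ∩ Wc a).card : ℝ) ≤ 5 * e) ∧
      ∃ b ∈ Γ (g + 1), γ ≤ ((nb G B' ∩ Wc b).card : ℝ) := by
  by_contra hcon
  push Not at hcon
  have hγe := S.hγe
  have hγ := S.hγ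
  have ht := S.ht
  have h1 := chain (G := G) Wc Γ B (5 * e) γ (2 * t) S.hγ (by linarith)
    (by rw [show 2 * γ * (2 * t) = 4 * (t * γ) by ring, S.hte]; linarith)
    (by
      intro v a
      have h1 := S.hs v
      have h2 : ((nb G {v} ∩ Wc a).card : ℝ) ≤ (nb G {v}).card := by
        exact_mod_cast Finset.card_le_card Finset.inter_subset_left
      linarith) m (fun g hg B' hB' hl => hcon g hg B' hB' hl) m le_rfl B subset_rfl hheavy
  rw [mul_pow, S.htm] at h1
  have h2 : (B.card : ℝ) ≤ Fintype.card α := by exact_mod_cast Finset.card_le_univ B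
  have h3 : (2 : ℝ) ^ 1 ≤ 2 ^ m := pow_le_pow_right₀ (by norm_num) S.hm
  have h4 : (0 : ℝ) < Fintype.card α := by exact_mod_cast S.hn
  nlinarith

/-- The statement that a large set `B` can be extended by `J` further steps. -/
def ExtSt (G : SimpleGraph α) (m : ℕ) (γ e : ℝ) (y : α) (J : ℕ) : Prop :=
  ∀ (i u : ℕ) (Om : Set α) (B : Finset α) (Wc : ℕ → Finset α), γ ≤ (B.card : ℝ) →
    Disjoint Om (Un Wc u (u + (m + 1) ^ J)) →
    (∀ a, u ≤ a → a < u + (m + 1) ^ J → ((J : ℝ) + 2) * (5 * e) ≤ ((Wc a).card : ℝ)) →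
    RP G y i B Om (Un Wc u (u + (m + 1) ^ J)) →
    Concl G y (i + J) Om Wc u (u + (m + 1) ^ J)

lemma card_sdiff_ge {W N : Finset α} {s w : ℝ} (h : s + w ≤ (W.card : ℝ))
    (h2 : ((N ∩ W).card : ℝ) ≤ w) : s ≤ ((W \ N).card : ℝ) := by
  have h3 : (W \ N).card + (W ∩ N).card = W.card := Finset.card_sdiff_add_card_inter W N
  rw [Finset.inter_comm] at h3
  have h3 : ((W \ N).card : ℝ) + ((N ∩ W).card : ℝ) = W.card := by exact_mod_cast h3
  linarith

lemma Setup.heavy_ext {m : ℕ} {γ e t : ℝ} (S : Setup G m γ e t) {y : α} {J : ℕ}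
    (ih : ExtSt G m γ e y J) (i u : ℕ) (Om : Set α) (B : Finset α) (Wc : ℕ → Finset α)
    (hd : Disjoint Om (Un Wc u (u + (m + 1) ^ (J + 1))))
    (hc : ∀ a, u ≤ a → a < u + (m + 1) ^ (J + 1) →
      (((J + 1 : ℕ) : ℝ) + 2) * (5 * e) ≤ ((Wc a).card : ℝ))
    (hR : RP G y i B Om (Un Wc u (u + (m + 1) ^ (J + 1))))
    (hheavy : ∃ a, u + m * (m + 1) ^ J ≤ a ∧ a < u + (m + 1) ^ (J + 1) ∧
      5 * e < ((nb G B ∩ Wc a).card : ℝ)) :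
    Concl G y (i + (J + 1)) Om Wc u (u + (m + 1) ^ (J + 1)) := by
  set K := (m + 1) ^ J with hK
  have hK1 : (m + 1) ^ (J + 1) = (m + 1) * K := by rw [pow_succ]; ring
  rw [hK1] at hd hc hR hheavy ⊢
  obtain ⟨g, hg, B', hB', hl, b, hb, hbγ⟩ := S.step Wc
    (fun g => Finset.Ico (u + g * K) (u + (g + 1) * K)) B (by
      obtain ⟨a, h1, h2, h3⟩ := hheavy
      exact ⟨a, Finset.mem_Ico.mpr ⟨h1, h2⟩, h3⟩)
  simp only [Finset.mem_Ico] at hl hb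
  have e1 : (g + 1) * K = g * K + K := by ring
  have e2 : (g + 1 + 1) * K = g * K + K + K := by ring
  have e3 : (g + 1 + 1) * K ≤ (m + 1) * K := Nat.mul_le_mul_right _ (by omega)
  rw [e1] at hl hb
  rw [e2] at hb e3
  have hbU : ∀ v ∈ nb G B' ∩ Wc b, v ∈ Un Wc u (u + (m + 1) * K) := by
    intro v hv
    exact ⟨b, by omega, by omega, (Finset.mem_inter.mp hv).2⟩
  have hUsub : Un (fun a => Wc a \ nb G B') (u + g * K) (u + g * K + K) ⊆
      Un Wc u (u + (m + 1) * K) := by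
    rintro v ⟨a, h1, h2, h3⟩
    exact ⟨a, by omega, by omega, (Finset.mem_sdiff.mp h3).1⟩
  have hUnb : ∀ v ∈ Un (fun a => Wc a \ nb G B') (u + g * K) (u + g * K + K), v ∉ nb G B' := by
    rintro v ⟨a, h1, h2, h3⟩
    exact (Finset.mem_sdiff.mp h3).2
  have hR' := hR.ext (E := nb G B' ∩ Wc b) hB' hd Finset.inter_subset_left hbU hUsub hUnb
  have hcon := ih (i + 1) (u + g * K) (Om ∪ {v | v ∈ nb G B' ∩ Wc b}) (nb G B' ∩ Wc b)
    (fun a => Wc a \ nb G B') hbγ (by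
      rw [← hK, Set.disjoint_left]
      rintro v (hv | hv) hv2
      · exact Set.disjoint_left.mp hd hv (hUsub hv2)
      · exact hUnb v hv2 (Finset.mem_inter.mp hv).1) (by
      intro a h1 h2
      rw [← hK] at h2
      have h3 := hc a (by omega) (by omega)
      push_cast at h3
      exact card_sdiff_ge (w := 5 * e) (by linarith) (hl a ⟨by omega, by omega⟩)) hR'
  rw [← hK] at hcon
  rw [show i + (J + 1) = i + 1 + J by ring]
  refine hcon.mono (by omega) (by omega) (fun a => Finset.sdiff_subset) ?_
  rintro x (hx | hx)
  · exact Or.inl hx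
  · exact Or.inr ⟨b, by omega, by omega, (Finset.mem_inter.mp hx).2⟩

lemma Setup.ext {m : ℕ} {γ e t : ℝ} (S : Setup G m γ e t) (y : α) (J : ℕ) : ExtSt G m γ e y J := by
  have hγe := S.hγe
  have hγ := S.hγ
  have hcov : ∀ (i u J : ℕ) (Om : Set α) (B : Finset α) (Wc : ℕ → Finset α), γ ≤ (B.card : ℝ) →
    Disjoint Om (Un Wc u (u + (m + 1) ^ J)) →
    RP G y i B Om (Un Wc u (u + (m + 1) ^ J)) → ∀ a, u ≤ a → a < u + (m + 1) ^ J →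
    ((Wc a).card : ℝ) - e < ((nb G B ∩ Wc a).card : ℝ) := by
    intro i u J Om B Wc hB hd hR a h1 h2
    apply S.cover B (Wc a) hB
    rw [Finset.disjoint_left]
    intro v hv hv2
    obtain ⟨p, -, h4, -, -, -, h5, -⟩ := hR v hv
    refine Set.disjoint_left.mp hd ?_ ⟨a, h1, h2, hv2⟩
    rw [← h4]
    exact h5 i le_rfl
  induction J with
  | zero =>
    intro i u Om B Wc hB hd hc hR
    have h1 := hcov i u 0 Om B Wc hB hd hR u le_rfl (by simp)
    have h2 := hc u le_rfl (by simp)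
    have h3 : (0 : ℝ) < ((nb G B ∩ Wc u).card : ℝ) := by push_cast at h2; linarith
    have h4 : 0 < (nb G B ∩ Wc u).card := by exact_mod_cast h3
    obtain ⟨z, hz⟩ := Finset.card_pos.mp h4
    obtain ⟨hz1, hz2⟩ := Finset.mem_inter.mp hz
    obtain ⟨β, hβ, hβz⟩ := mem_nb.mp hz1
    obtain ⟨p, q1, q2, q3, q4, q5, q6, q7⟩ := hR β hβ
    refine ⟨u, le_rfl, by simp, p, z, q1, q3, q4, q5, fun g hg => Or.inl (q6 g hg), hz2,
      by simpa [q2] using hβz, ?_⟩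
    intro g hg
    exact q7 g hg z ⟨u, le_rfl, by simp, hz2⟩
  | succ J ih =>
    intro i u Om B Wc hB hd hc hR
    refine S.heavy_ext ih i u Om B Wc hd hc hR ⟨u + m * (m + 1) ^ J, le_rfl, ?_, ?_⟩
    · have : 0 < (m + 1) ^ J := by positivity
      rw [pow_succ]
      nlinarith
    · have hlt : u + m * (m + 1) ^ J < u + (m + 1) ^ (J + 1) := by
        have : 0 < (m + 1) ^ J := by positivity
        rw [pow_succ]
        nlinarith
      have h1 := hcov i u (J + 1) Om B Wc hB hd hR (u + m * (m + 1) ^ J) (by omega) hlt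
      have h2 := hc (u + m * (m + 1) ^ J) (by omega) hlt
      have h3 : (0 : ℝ) ≤ J := by positivity
      push_cast at h2
      nlinarith

/-- Breadth-first search from `B` inside `Hc` reaches a level of size at least `γ` in `d` steps. -/
def Reach (G : SimpleGraph α) (γ : ℝ) : ℕ → Finset α → Finset α → Prop
  | 0, B, _ => γ ≤ (B.card : ℝ)
  | d + 1, B, Hc => Reach G γ d (nb G B ∩ Hc) (Hc \ nb G B)

lemma Setup.start {m : ℕ} {γ e t : ℝ} (S : Setup G m γ e t) (y : α) : ∀ (d J i u : ℕ)
    (B Hc : Finset α) (Om : Set α) (Wc : ℕ → Finset α), d ≤ J → Reach G γ d B Hc →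
    Disjoint Om ({v | v ∈ Hc} ∪ Un Wc u (u + (m + 1) ^ J)) →
    (∀ a, u ≤ a → a < u + (m + 1) ^ J → ((J : ℝ) + 2) * (5 * e) ≤ ((Wc a).card : ℝ)) →
    RP G y i B Om ({v | v ∈ Hc} ∪ Un Wc u (u + (m + 1) ^ J)) →
    Concl G y (i + J) (Om ∪ {v | v ∈ Hc}) Wc u (u + (m + 1) ^ J) := by
  intro d
  induction d with
  | zero =>
    intro J i u B Hc Om Wc hJ hr hd hc hR
    have := S.ext y J i u Om B Wc hr (hd.mono_right Set.subset_union_right) hc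
      (hR.mono Set.subset_union_right)
    exact this.mono le_rfl le_rfl (fun _ => subset_rfl) (fun x hx => Or.inl (Or.inl hx))
  | succ d ih =>
    intro J i u B Hc Om Wc hJ hr hd hc hR
    obtain ⟨J, rfl⟩ : ∃ J', J = J' + 1 := ⟨J - 1, by omega⟩
    by_cases hheavy : ∃ a, u + m * (m + 1) ^ J ≤ a ∧ a < u + (m + 1) ^ (J + 1) ∧
      5 * e < ((nb G B ∩ Wc a).card : ℝ)
    · have := S.heavy_ext (S.ext y J) i u Om B Wc (hd.mono_right Set.subset_union_right) hc
        (hR.mono Set.subset_union_right) hheavy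
      exact this.mono le_rfl le_rfl (fun _ => subset_rfl) (fun x hx => Or.inl (Or.inl hx))
    · push Not at hheavy
      have hK1 : u + (m + 1) ^ (J + 1) = u + m * (m + 1) ^ J + (m + 1) ^ J := by
        rw [pow_succ]; ring
      rw [hK1] at hd hc hR hheavy ⊢
      set u' := u + m * (m + 1) ^ J with hu'
      have hsub : ({v | v ∈ Hc \ nb G B} ∪ Un (fun a => Wc a \ nb G B) u' (u' + (m + 1) ^ J)) ⊆
          ({v | v ∈ Hc} ∪ Un Wc u (u' + (m + 1) ^ J)) := by
        rintro v (hv | ⟨a, h1, h2, h3⟩)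
        · exact Or.inl (Finset.mem_sdiff.mp hv).1
        · exact Or.inr ⟨a, by omega, h2, (Finset.mem_sdiff.mp h3).1⟩
      have hnb : ∀ v ∈ ({v | v ∈ Hc \ nb G B} ∪
          Un (fun a => Wc a \ nb G B) u' (u' + (m + 1) ^ J)), v ∉ nb G B := by
        rintro v (hv | ⟨a, h1, h2, h3⟩)
        · exact (Finset.mem_sdiff.mp hv).2
        · exact (Finset.mem_sdiff.mp h3).2
      have hR' := hR.ext (E := nb G B ∩ Hc) subset_rfl hd Finset.inter_subset_left
        (fun v hv => Or.inl (Finset.mem_inter.mp hv).2) hsub hnb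
      have := ih J (i + 1) u' (nb G B ∩ Hc) (Hc \ nb G B) (Om ∪ {v | v ∈ nb G B ∩ Hc})
        (fun a => Wc a \ nb G B) (by omega) hr (by
          rw [Set.disjoint_left]
          rintro v (hv | hv) hv2
          · exact Set.disjoint_left.mp hd hv (hsub hv2)
          · exact hnb v hv2 (Finset.mem_inter.mp hv).1) (by
          intro a h1 h2
          have h3 := hc a (by omega) (by omega)
          push_cast at h3
          exact card_sdiff_ge (w := 5 * e) (by linarith) (hheavy a h1 (by omega))) hR'
      rw [show i + (J + 1) = i + 1 + J by ring]
      refine this.mono (by omega) le_rfl (fun a => Finset.sdiff_subset) ?_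
      rintro x ((hx | hx) | hx)
      · exact Or.inl (Or.inl hx)
      · exact Or.inl (Or.inr (Finset.mem_inter.mp hx).2)
      · exact Or.inl (Or.inr (Finset.mem_sdiff.mp hx).1)

/-- Growth: in a cleaned set, breadth-first search grows by a factor of `t` in each step. -/
lemma Setup.growth_aux {m : ℕ} {γ e t : ℝ} (S : Setup G m γ e t) (U Z X : Finset α) (hZU : Z ⊆ U)
    (hX : ∀ Y ⊆ U \ X, Y.Nonempty → (Y.card : ℝ) ≤ m * γ →
      t * (Y.card : ℝ) ≤ (((nb G Y ∩ Z) \ (X ∪ Y)).card : ℝ)) :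
    ∀ d i : ℕ, i + d = m - 1 → ∀ B vis : Finset α, vis ⊆ U \ X → B ⊆ vis →
      t ^ i ≤ (B.card : ℝ) → ((vis \ B).card : ℝ) ≤ i * γ →
      (nb G vis ∩ (Z \ X)) \ vis ⊆ nb G B →
      ∃ d' ≤ d, Reach G γ d' B ((Z \ X) \ vis) := by
  have ht := S.ht
  have hγ := S.hγ
  intro d
  induction d with
  | zero =>
    intro i hi B vis _ _ hB _ _
    refine ⟨0, le_rfl, ?_⟩
    have : i = m - 1 := by omega
    subst this
    exact S.hγt.trans hB
  | succ d ih =>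
    intro i hi B vis hvU hBv hB hvB hnb
    by_cases hbig : γ ≤ (B.card : ℝ)
    · exact ⟨0, by omega, hbig⟩
    push Not at hbig
    have hBpos : (0 : ℝ) < B.card := lt_of_lt_of_le (by positivity) hB
    have hBne : B.Nonempty := Finset.card_pos.mp (by exact_mod_cast hBpos)
    have hviscard : (vis.card : ℝ) = ((vis \ B).card : ℝ) + B.card := by
      exact_mod_cast (Finset.card_sdiff_add_card_eq_card hBv).symm
    have him : ((i : ℝ) + 1) ≤ m := by
      have : i + 1 ≤ m := by omega
      exact_mod_cast this
    have h1 := hX vis hvU (hBne.mono hBv) (by nlinarith)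
    have h2 : (nb G vis ∩ Z) \ (X ∪ vis) ⊆ nb G B ∩ ((Z \ X) \ vis) := by
      intro v hv
      simp only [Finset.mem_sdiff, Finset.mem_inter, Finset.mem_union, not_or] at hv ⊢
      refine ⟨hnb ?_, ⟨hv.1.2, hv.2.1⟩, hv.2.2⟩
      simp only [Finset.mem_sdiff, Finset.mem_inter]
      tauto
    have h3 : (((nb G vis ∩ Z) \ (X ∪ vis)).card : ℝ) ≤ (nb G B ∩ ((Z \ X) \ vis)).card := by
      exact_mod_cast Finset.card_le_card h2
    set B' := nb G B ∩ ((Z \ X) \ vis) with hB'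
    have hvis_le : (B.card : ℝ) ≤ vis.card := by exact_mod_cast Finset.card_le_card hBv
    obtain ⟨d', hd', hr⟩ := ih (i + 1) (by omega) B' (vis ∪ B') (by
        apply Finset.union_subset hvU
        intro v hv
        simp only [hB', Finset.mem_sdiff, Finset.mem_inter] at hv ⊢
        exact ⟨hZU hv.2.1.1, hv.2.1.2⟩) Finset.subset_union_right (by
        rw [pow_succ]
        nlinarith) (by
        have : (((vis ∪ B') \ B').card : ℝ) ≤ vis.card := by
          apply Nat.cast_le.mpr
          apply Finset.card_le_card
          intro v hv
          simp only [Finset.mem_sdiff, Finset.mem_union] at hv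
          tauto
        push_cast
        nlinarith) (by
        intro v hv
        rw [nb_union] at hv
        simp only [Finset.mem_sdiff, Finset.mem_inter, Finset.mem_union, not_or] at hv
        obtain ⟨⟨h | h, h5, h6⟩, h7, h8⟩ := hv
        · exfalso
          apply h8
          rw [hB']
          simp only [Finset.mem_sdiff, Finset.mem_inter]
          refine ⟨hnb ?_, ⟨h5, h6⟩, h7⟩
          simp only [Finset.mem_sdiff, Finset.mem_inter]
          exact ⟨⟨h, h5, h6⟩, h7⟩
        · exact h)
    refine ⟨d' + 1, by omega, ?_⟩
    have : ((Z \ X) \ vis) \ nb G B = (Z \ X) \ (vis ∪ B') := by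
      ext v
      simp only [hB', Finset.mem_sdiff, Finset.mem_inter, Finset.mem_union]
      tauto
    rw [Reach, this]
    exact hr

lemma Setup.growth {m : ℕ} {γ e t : ℝ} (S : Setup G m γ e t) (U Z X : Finset α) (hZU : Z ⊆ U)
    (hX : ∀ Y ⊆ U \ X, Y.Nonempty → (Y.card : ℝ) ≤ m * γ →
      t * (Y.card : ℝ) ≤ (((nb G Y ∩ Z) \ (X ∪ Y)).card : ℝ)) (y : α) (hy : y ∈ U \ X) :
    ∃ d ≤ m - 1, Reach G γ d {y} ((Z \ X) \ {y}) := by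
  refine S.growth_aux U Z X hZU hX (m - 1) 0 (by omega) {y} {y} (by simpa using hy) subset_rfl
    (by simp) (by simp) ?_
  intro v hv
  simp only [Finset.mem_sdiff, Finset.mem_inter] at hv
  exact hv.1.1
end paths

section balls
open scoped Classical
set_option linter.unusedSectionVars false
variable {α : Type*} [Fintype α] {G : SimpleGraph α}

/-- The ball of radius `i` around `v`. -/
def bl (G : SimpleGraph α) (v : α) : ℕ → Finset α
  | 0 => {v}
  | i + 1 => bl G v i ∪ nb G (bl G v i)

lemma bl_mono (v : α) {i j : ℕ} (h : i ≤ j) : bl G v i ⊆ bl G v j := by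
  induction h with
  | refl => exact subset_rfl
  | step _ ih => exact ih.trans Finset.subset_union_left

lemma bl_adj {v u u' : α} {i : ℕ} (h : u ∈ bl G v i) (ha : G.Adj u u') : u' ∈ bl G v (i + 1) :=
  Finset.mem_union_right _ (mem_nb.mpr ⟨u, h, ha⟩)

lemma bl_front {v v' u : α} (ha : G.Adj v v') : ∀ {i : ℕ}, u ∈ bl G v' i → u ∈ bl G v (i + 1) := by
  intro i
  induction i generalizing u with
  | zero =>
    intro h
    have h : u = v' := by simpa [bl] using h
    subst h
    exact bl_adj (i := 0) (by simp [bl]) ha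
  | succ i ih =>
    intro h
    rcases Finset.mem_union.mp h with h | h
    · exact bl_mono v (by omega) (ih h)
    · obtain ⟨b, hb, hbu⟩ := mem_nb.mp h
      exact bl_adj (ih hb) hbu

lemma bl_path {p : ℕ → α} {k : ℕ} (hp : ∀ g < k, G.Adj (p g) (p (g + 1))) {l : ℕ} :
    ∀ {d : ℕ}, l + d ≤ k → p (l + d) ∈ bl G (p l) d := by
  intro d
  induction d with
  | zero => intro _; simp [bl]
  | succ d ih =>
    intro h
    exact bl_adj (ih (by omega)) (hp (l + d) (by omega))

lemma bl_exists {v : α} : ∀ {i : ℕ} {u : α}, u ∈ bl G v i →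
    ∃ (p : ℕ → α) (j : ℕ), j ≤ i ∧ p 0 = v ∧ p j = u ∧ ∀ g < j, G.Adj (p g) (p (g + 1)) := by
  intro i
  induction i with
  | zero =>
    intro u hu
    have hu : u = v := by simpa [bl] using hu
    exact ⟨fun _ => v, 0, le_rfl, rfl, hu.symm, by simp⟩
  | succ i ih =>
    intro u hu
    rcases Finset.mem_union.mp hu with h | h
    · obtain ⟨p, j, h1, h2⟩ := ih h
      exact ⟨p, j, by omega, h2⟩
    · obtain ⟨b, hb, hbu⟩ := mem_nb.mp h
      obtain ⟨p, j, h1, h2, h3, h4⟩ := ih hb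
      refine ⟨fun g => if g ≤ j then p g else u, j + 1, by omega, by simpa using h2, by simp, ?_⟩
      intro g hg
      by_cases hgj : g = j
      · subst hgj
        simpa [h3] using hbu
      · simpa [show g ≤ j by omega, show g + 1 ≤ j by omega] using h4 g (by omega)

/-- A vertex outside a ball with a neighbour `f` in it: a geodesic through `f`. -/
lemma bl_geo {s u f : α} {k : ℕ} (hk : 1 ≤ k) (hf : f ∈ bl G s (k - 1)) (hfu : G.Adj f u)
    (hu : u ∉ bl G s (k - 1)) :
    ∃ p : ℕ → α, p 0 = s ∧ p (k - 1) = f ∧ p k = u ∧ ∀ g < k, G.Adj (p g) (p (g + 1)) := by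
  obtain ⟨p, j, h1, h2, h3, h4⟩ := bl_exists hf
  have hj : j = k - 1 := by
    by_contra hne
    apply hu
    have h5 := bl_path h4 (l := 0) (d := j) (by omega)
    rw [Nat.zero_add, h3, h2] at h5
    exact bl_mono s (by omega) (bl_adj h5 hfu)
  subst hj
  refine ⟨fun g => if g ≤ k - 1 then p g else u, by simpa using h2, by simpa using h3, ?_, ?_⟩
  · simp [show ¬ k ≤ k - 1 by omega]
  · intro g hg
    by_cases hgj : g = k - 1
    · subst hgj
      simpa [h3] using hfu
    · simpa [show g ≤ k - 1 by omega, show g + 1 ≤ k - 1 by omega] using h4 g (by omega)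

/-- Basic properties of a geodesic. -/
structure Geo (G : SimpleGraph α) (s : α) (k : ℕ) (p : ℕ → α) : Prop where
  h0 : p 0 = s
  adj : ∀ g < k, G.Adj (p g) (p (g + 1))
  far : p k ∉ bl G s (k - 1)

lemma Geo.mem {s : α} {k : ℕ} {p : ℕ → α} (h : Geo G s k p) {j : ℕ} (hj : j ≤ k) :
    p j ∈ bl G s j := by
  have := bl_path h.adj (l := 0) (d := j) (by omega)
  rwa [Nat.zero_add, h.h0] at this

lemma Geo.not_mem {s : α} {k : ℕ} {p : ℕ → α} (h : Geo G s k p) {i j : ℕ} (hj : j ≤ k)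
    (hij : i < j) : p j ∉ bl G s i := by
  intro hm
  apply h.far
  have key : ∀ d, j + d ≤ k → p (j + d) ∈ bl G s (i + d) := by
    intro d
    induction d with
    | zero => intro _; exact hm
    | succ d ih => intro hd; exact bl_adj (ih (by omega)) (h.adj (j + d) (by omega))
  have := key (k - j) (by omega)
  rw [show j + (k - j) = k by omega] at this
  exact bl_mono s (by omega) this

lemma Geo.nonadj {s : α} {k : ℕ} {p : ℕ → α} (h : Geo G s k p) {i j : ℕ} (hij : i + 1 < j)
    (hj : j ≤ k) : ¬ G.Adj (p i) (p j) := fun ha =>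
  h.not_mem hj (i := i + 1) hij (bl_adj (h.mem (by omega)) ha)

lemma Geo.ne {s : α} {k : ℕ} {p : ℕ → α} (h : Geo G s k p) {i j : ℕ} (hij : i < j)
    (hj : j ≤ k) : p i ≠ p j := fun ha =>
  h.not_mem hj (i := i) hij (ha ▸ h.mem (by omega))

lemma reach_bl {γ : ℝ} {y : α} : ∀ (d i : ℕ) (B Hc : Finset α), B ⊆ bl G y i →
    Reach G γ d B Hc → γ ≤ ((bl G y (i + d)).card : ℝ) := by
  intro d
  induction d with
  | zero =>
    intro i B Hc hB hr
    exact le_trans hr (by exact_mod_cast Finset.card_le_card hB)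
  | succ d ih =>
    intro i B Hc hB hr
    rw [show i + (d + 1) = i + 1 + d by ring]
    refine ih (i + 1) _ _ ?_ hr
    intro v hv
    obtain ⟨b, hb, hbv⟩ := mem_nb.mp (Finset.mem_inter.mp hv).1
    exact bl_adj (hB hb) hbv

lemma Setup.exists_big_ball {m : ℕ} {γ e t : ℝ} (S : Setup G m γ e t)
    (hsm : (2 * m + 3) * e ≤ (Fintype.card α : ℝ)) :
    ∃ y, (Fintype.card α : ℝ) - e ≤ ((bl G y m).card : ℝ) := by
  have hγe := S.hγe
  have hγ := S.hγ
  have ht := S.ht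
  have hm := S.hm
  obtain ⟨X, -, hXc, hX⟩ := cleaning (G := G) m γ e t (Fintype.card α : ℝ) hγ (by linarith) S.hte
    hγe S.hco Finset.univ Finset.univ (by simp [Finset.card_univ]) hsm
  have hex : ∃ y, y ∉ X := by
    by_contra hcon
    push Not at hcon
    have : X = Finset.univ := by ext; simp [hcon]
    rw [this, Finset.card_univ] at hXc
    have : (0 : ℝ) ≤ m := by positivity
    nlinarith
  obtain ⟨y, hy⟩ := hex
  obtain ⟨d, hd, hr⟩ := S.growth Finset.univ Finset.univ X subset_rfl hX y (by simpa using hy)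
  have h1 := reach_bl (y := y) d 0 _ _ (by simp [bl]) hr
  rw [Nat.zero_add] at h1
  have h2 := S.cover (bl G y d) (Finset.univ \ bl G y d) h1 Finset.disjoint_sdiff
  refine ⟨y, ?_⟩
  have h3 : bl G y d ∪ (nb G (bl G y d) ∩ (Finset.univ \ bl G y d)) ⊆ bl G y m := by
    refine Finset.Subset.trans ?_ (bl_mono y (show d + 1 ≤ m by omega))
    apply Finset.union_subset_union subset_rfl Finset.inter_subset_left
  have h4 := Finset.card_le_card h3
  rw [Finset.card_union_of_disjoint (by
    rw [Finset.disjoint_left]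
    intro v hv hv2
    simp only [Finset.mem_inter, Finset.mem_sdiff] at hv2
    exact hv2.2.2 hv)] at h4
  have h5 : (Finset.univ \ bl G y d).card + (bl G y d).card = Fintype.card α := by
    rw [← Finset.card_univ]
    exact Finset.card_sdiff_add_card_eq_card (Finset.subset_univ _)
  have h4' : ((bl G y d).card : ℝ) + ((nb G (bl G y d) ∩ (Finset.univ \ bl G y d)).card : ℝ) ≤
    ((bl G y m).card : ℝ) := by exact_mod_cast h4
  have h5' : ((Finset.univ \ bl G y d).card : ℝ) + (bl G y d).card = Fintype.card α := by
    exact_mod_cast h5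
  linarith

lemma Setup.part0 {m : ℕ} {γ e t : ℝ} (S : Setup G m γ e t) (h1e : 1 ≤ e) (N0 : ℝ) (hN0 : 1 ≤ N0)
    (hsm : (2 * m + 3) * e ≤ (Fintype.card α : ℝ))
    (hsm2 : 6 * N0 ^ m * e ≤ (Fintype.card α : ℝ)) :
    ∃ (k : ℕ) (s : α) (η : ℝ), 2 ≤ k ∧ k ≤ m ∧ η ≤ ((bl G s k).card : ℝ) ∧
      2 * η ≤ (Fintype.card α : ℝ) ∧ (Fintype.card α : ℝ) ≤ 2 * N0 ^ m * η ∧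
      ∀ v, ((bl G v (k - 1)).card : ℝ) * N0 ≤ η := by
  set n : ℝ := (Fintype.card α : ℝ) with hn
  have hnpos : 0 < n := by rw [hn]; exact_mod_cast S.hn
  have hN0' : 0 < N0 := by linarith
  let δ : ℕ → ℝ := fun j => n / (2 * N0 ^ (m - j))
  have hP : ∃ k, ∃ s, δ k ≤ ((bl G s k).card : ℝ) := by
    obtain ⟨y, hy⟩ := S.exists_big_ball hsm
    refine ⟨m, y, le_trans ?_ hy⟩
    simp only [δ, Nat.sub_self, pow_zero, mul_one]
    have : (0 : ℝ) ≤ m := by positivity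
    nlinarith
  have hδ : ∀ j, 3 * e ≤ δ j := by
    intro j
    simp only [δ]
    rw [le_div_iff₀ (by positivity)]
    have : N0 ^ (m - j) ≤ N0 ^ m := pow_le_pow_right₀ hN0 (by omega)
    nlinarith
  obtain ⟨s, hs⟩ := Nat.find_spec hP
  have hmin := fun j (hj : j < Nat.find hP) => Nat.find_min hP hj
  have hle : Nat.find hP ≤ m := by
    apply Nat.find_min'
    obtain ⟨y, hy⟩ := S.exists_big_ball hsm
    refine ⟨y, le_trans ?_ hy⟩
    simp only [δ, Nat.sub_self, pow_zero, mul_one]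
    have : (0 : ℝ) ≤ m := by positivity
    nlinarith
  generalize Nat.find hP = k at *
  have hk2 : 2 ≤ k := by
    by_contra hcon
    have h1 : ((bl G s k).card : ℝ) ≤ ((bl G s 1).card : ℝ) := by
      exact_mod_cast Finset.card_le_card (bl_mono s (by omega))
    have h2 : ((bl G s 1).card : ℝ) ≤ 1 + ((nb G {s}).card : ℝ) := by
      have : (bl G s 1).card ≤ 1 + (nb G {s}).card := by
        have := Finset.card_union_le ({s} : Finset α) (nb G {s})
        simpa [bl] using this
      exact_mod_cast this
    have h3 := S.hs s
    have h4 := hδ k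
    linarith
  refine ⟨k, s, δ k, hk2, hle, hs, ?_, ?_, ?_⟩
  · simp only [δ]
    have : 1 ≤ N0 ^ (m - k) := one_le_pow₀ hN0
    rw [← mul_div_assoc, div_le_iff₀ (by positivity)]
    nlinarith
  · simp only [δ]
    have : N0 ^ (m - k) ≤ N0 ^ m := pow_le_pow_right₀ hN0 (by omega)
    rw [← mul_div_assoc, le_div_iff₀ (by positivity)]
    nlinarith
  · intro v
    have h1 := hmin (k - 1) (by omega)
    push Not at h1
    have h2 := h1 v
    have h3 : δ k = δ (k - 1) * N0 := by
      simp only [δ]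
      rw [show m - (k - 1) = m - k + 1 by omega, pow_succ]
      field_simp
    rw [h3]
    nlinarith

/-- One step of the nested-cover construction. -/
lemma cover_step (e τ : ℝ) (hs : ∀ v, ((nb G {v}).card : ℝ) ≤ e) (R P F' : Finset α)
    (he : 0 ≤ e) (hF' : F' ⊆ P) (h1 : ((nb G F' ∩ R).card : ℝ) ≤ τ)
    (h2 : τ ≤ ((nb G P ∩ R).card : ℝ)) :
    ∃ F, F' ⊆ F ∧ F ⊆ P ∧ τ ≤ ((nb G F ∩ R).card : ℝ) ∧ ((nb G F ∩ R).card : ℝ) ≤ τ + e := by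
  have hne : (P.powerset.filter (fun F => F' ⊆ F ∧ τ ≤ ((nb G F ∩ R).card : ℝ))).Nonempty :=
    ⟨P, by simp only [Finset.mem_filter, Finset.mem_powerset]; exact ⟨subset_rfl, hF', h2⟩⟩
  obtain ⟨F, hF, hmin⟩ := Finset.exists_min_image _ Finset.card hne
  simp only [Finset.mem_filter, Finset.mem_powerset] at hF hmin
  obtain ⟨hFP, hF'F, hFτ⟩ := hF
  refine ⟨F, hF'F, hFP, hFτ, ?_⟩
  by_cases hFF : F ⊆ F'
  · have : F = F' := Finset.Subset.antisymm hFF hF'F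
    rw [this]
    linarith
  · obtain ⟨v, hv, hv'⟩ := Finset.not_subset.mp hFF
    have h3 : ((nb G (F.erase v) ∩ R).card : ℝ) < τ := by
      by_contra hcon
      push Not at hcon
      have := hmin (F.erase v) ⟨(Finset.erase_subset _ _).trans hFP, fun x hx =>
        Finset.mem_erase.mpr ⟨fun h => hv' (h ▸ hx), hF'F hx⟩, hcon⟩
      have := Finset.card_erase_lt_of_mem hv
      omega
    have h4 := card_nb_union_le (G := G) (F.erase v) {v} R
    have h5 : F.erase v ∪ {v} = F := by
      ext x
      simp only [Finset.mem_union, Finset.mem_erase, Finset.mem_singleton]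
      constructor
      · rintro (h | h)
        · exact h.2
        · exact h ▸ hv
      · intro h
        tauto
    rw [h5] at h4
    have h6 : ((nb G {v} ∩ R).card : ℝ) ≤ (nb G {v}).card := by
      exact_mod_cast Finset.card_le_card Finset.inter_subset_left
    have := hs v
    linarith

lemma cover_chain (e θ : ℝ) (hs : ∀ v, ((nb G {v}).card : ℝ) ≤ e) (R P : Finset α)
    (he : 0 ≤ e) (hθ : e ≤ θ) : ∀ r : ℕ, (r : ℝ) * θ ≤ ((nb G P ∩ R).card : ℝ) →
    ∃ F : ℕ → Finset α, (∀ a ≤ r, F a ⊆ P ∧ (a : ℝ) * θ ≤ ((nb G (F a) ∩ R).card : ℝ) ∧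
      ((nb G (F a) ∩ R).card : ℝ) ≤ a * θ + e) ∧ ∀ a b, a ≤ b → b ≤ r → F a ⊆ F b := by
  intro r
  induction r with
  | zero =>
    intro _
    refine ⟨fun _ => ∅, ?_, fun _ _ _ _ => subset_rfl⟩
    intro a ha
    have : a = 0 := by omega
    subst this
    simp [nb_empty, he]
  | succ r ih =>
    intro hr
    push_cast at hr
    obtain ⟨F, hF, hmon⟩ := ih (by nlinarith)
    obtain ⟨h1, h2, h3⟩ := hF r le_rfl
    obtain ⟨F1, q1, q2, q3, q4⟩ := cover_step (G := G) e ((r + 1) * θ) hs R P (F r) he h1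
      (by nlinarith) hr
    refine ⟨fun a => if a ≤ r then F a else F1, ?_, ?_⟩
    · intro a ha
      by_cases har : a ≤ r
      · simpa [har] using hF a har
      · have : a = r + 1 := by omega
        subst this
        simp only [har, if_false]
        push_cast
        exact ⟨q2, q3, q4⟩
    · intro a b hab hb
      by_cases hbr : b ≤ r
      · simpa [hbr, show a ≤ r by omega] using hmon a b hab hbr
      · by_cases har : a ≤ r
        · simpa [hbr, har] using (hmon a r har le_rfl).trans q1
        · simp [hbr, har]

end balls

section cyc
variable {α : Type*} {G : SimpleGraph α}

lemma cycle_embed (ℓ : ℕ) (hℓ : 3 ≤ ℓ) (f : ℕ → α)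
    (hadj : ∀ j, j + 1 < ℓ → G.Adj (f j) (f (j + 1))) (hcl : G.Adj (f 0) (f (ℓ - 1)))
    (hnon : ∀ i j, i + 1 < j → j < ℓ → ¬ (i = 0 ∧ j = ℓ - 1) → ¬ G.Adj (f i) (f j))
    (hne : ∀ i j, i < j → j < ℓ → f i ≠ f j) : Nonempty (cycleGraph ℓ ↪g G) := by
  obtain ⟨n, rfl⟩ : ∃ n, ℓ = n + 3 := ⟨ℓ - 3, by omega⟩
  have hinj : Function.Injective (fun i : Fin (n + 3) => f i) := by
    intro i j hij
    by_contra h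
    rcases lt_or_gt_of_ne (fun h' => h (Fin.ext h') : (i : ℕ) ≠ j) with h' | h'
    · exact hne _ _ h' j.2 hij
    · exact hne _ _ h' i.2 hij.symm
  have key : ∀ i j : Fin (n + 3), (i : ℕ) < j →
      (G.Adj (f i) (f j) ↔ (cycleGraph (n + 3)).Adj i j) := by
    intro i j hij
    have h1 : (cycleGraph (n + 3)).Adj i j ↔ ((i : ℕ) + 1 = j ∨ ((i : ℕ) = 0 ∧ (j : ℕ) = n + 2)) := by
      rw [cycleGraph_adj']
      have hi := i.2
      have hj := j.2
      have e1 : ((i - j : Fin (n + 3)) : ℕ) = n + 3 - j + i := by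
        rw [Fin.coe_sub_iff_lt.mpr (by exact hij)]
        omega
      have e2 : ((j - i : Fin (n + 3)) : ℕ) = j - i := Fin.coe_sub_iff_le.mpr (by
        rw [Fin.le_def]; omega)
      rw [e1, e2]
      omega
    rw [h1]
    constructor
    · intro ha
      by_contra hcon
      push Not at hcon
      exact hnon i j (by omega) j.2 (by have := hcon.2; omega) ha
    · rintro (h | ⟨h, h'⟩)
      · rw [← h]
        exact hadj i (by have := j.2; omega)
      · rw [h, h']
        exact hcl
  refine ⟨⟨⟨fun i => f i, hinj⟩, ?_⟩⟩
  intro i j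
  show G.Adj (f i) (f j) ↔ _
  rcases lt_trichotomy (i : ℕ) j with h | h | h
  · exact key i j h
  · have : i = j := Fin.ext h
    subst this
    simp
  · rw [G.adj_comm, (cycleGraph (n + 3)).adj_comm]
    exact key j i h

/-- Assembling the cycle from three induced paths. -/
lemma cycle_three (k i h : ℕ) (hik : i ≤ k) (hh : 1 ≤ h) (hk : 1 ≤ k) (y p x : ℕ → α)
    (yadj : ∀ g < k, G.Adj (y g) (y (g + 1)))
    (ynon : ∀ g g', g + 1 < g' → g' ≤ k → ¬ G.Adj (y g) (y g'))
    (yne : ∀ g g', g < g' → g' ≤ k → y g ≠ y g')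
    (xadj : ∀ g < k, G.Adj (x g) (x (g + 1)))
    (xnon : ∀ g g', g + 1 < g' → g' ≤ k → ¬ G.Adj (x g) (x g'))
    (xne : ∀ g g', g < g' → g' ≤ k → x g ≠ x g')
    (p0 : p 0 = y k)
    (padj : ∀ g < h, G.Adj (p g) (p (g + 1)))
    (pnon : ∀ g g', g + 1 < g' → g' ≤ h → ¬ G.Adj (p g) (p g'))
    (pne : ∀ g g', g < g' → g' ≤ h → p g ≠ p g')
    (pz : G.Adj (p h) (x k)) (pzn : ∀ g < h, ¬ G.Adj (p g) (x k))
    (ypn : ∀ j < k, ∀ g, 1 ≤ g → g ≤ h → ¬ G.Adj (y j) (p g) ∧ y j ≠ p g)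
    (pxn : ∀ g, 1 ≤ g → g ≤ h → ∀ l, 1 ≤ l → l < k → ¬ G.Adj (p g) (x l))
    (pxe : ∀ g, 1 ≤ g → g ≤ h → ∀ l, 1 ≤ l → l ≤ k → p g ≠ x l)
    (yx : G.Adj (y i) (x 1))
    (yxn : ∀ j, i ≤ j → j ≤ k → ∀ l, 1 ≤ l → l ≤ k → ¬ (j = i ∧ l = 1) → ¬ G.Adj (y j) (x l))
    (yxe : ∀ j, i ≤ j → j ≤ k → ∀ l, 1 ≤ l → l ≤ k → y j ≠ x l) (hl3 : 3 ≤ k - i + h + k + 1) :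
    Nonempty (cycleGraph (k - i + h + k + 1) ↪g G) := by
  set a := k - i with ha
  have hY : ∀ j, j ≤ a → (fun j => if j ≤ a then y (i + j) else if j ≤ a + h then p (j - a)
      else x (a + h + k + 1 - j)) j = y (i + j) := by
    intro j hj
    simp [hj]
  have hP : ∀ j, a ≤ j → j ≤ a + h → (fun j => if j ≤ a then y (i + j) else if j ≤ a + h then
      p (j - a) else x (a + h + k + 1 - j)) j = p (j - a) := by
    intro j hj hj2
    by_cases hja : j = a
    · subst hja
      simp [p0, show i + a = k by omega]
    · simp [show ¬ j ≤ a by omega, hj2]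
  have hX : ∀ j, a + h < j → (fun j => if j ≤ a then y (i + j) else if j ≤ a + h then
      p (j - a) else x (a + h + k + 1 - j)) j = x (a + h + k + 1 - j) := by
    intro j hj
    simp [show ¬ j ≤ a by omega, show ¬ j ≤ a + h by omega]
  generalize (fun j => if j ≤ a then y (i + j) else if j ≤ a + h then
      p (j - a) else x (a + h + k + 1 - j)) = f at *
  refine cycle_embed _ hl3 f ?_ ?_ ?_ ?_
  · intro j hj
    by_cases h1 : j + 1 ≤ a
    · rw [hY j (by omega), hY (j + 1) h1]
      exact yadj (i + j) (by omega)
    · by_cases h2 : j + 1 ≤ a + h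
      · rw [hP j (by omega) (by omega), hP (j + 1) (by omega) h2,
          show j + 1 - a = j - a + 1 by omega]
        exact padj (j - a) (by omega)
      · by_cases h3 : j ≤ a + h
        · rw [hP j (by omega) (by omega), hX (j + 1) (by omega), show j - a = h by omega,
            show a + h + k + 1 - (j + 1) = k by omega]
          exact pz
        · rw [hX j (by omega), hX (j + 1) (by omega),
            show a + h + k + 1 - j = a + h + k + 1 - (j + 1) + 1 by omega]
          exact (xadj _ (by omega)).symm
  · rw [hY 0 (by omega), hX _ (by omega), show a + h + k + 1 - (a + h + k + 1 - 1) = 1 by omega]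
    exact yx
  · intro u v huv hv hex
    by_cases h1 : u ≤ a
    · by_cases h2 : v ≤ a
      · rw [hY u h1, hY v h2]
        exact ynon _ _ (by omega) (by omega)
      · by_cases h3 : v ≤ a + h
        · by_cases h4 : u = a
          · rw [hP u (by omega) (by omega), hP v (by omega) h3]
            exact pnon _ _ (by omega) (by omega)
          · rw [hY u h1, hP v (by omega) h3]
            exact (ypn _ (by omega) _ (by omega) (by omega)).1
        · rw [hY u h1, hX v (by omega)]
          exact yxn _ (by omega) (by omega) _ (by omega) (by omega) (by omega)
    · by_cases h3 : v ≤ a + h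
      · rw [hP u (by omega) (by omega), hP v (by omega) h3]
        exact pnon _ _ (by omega) (by omega)
      · by_cases h4 : u ≤ a + h
        · rw [hP u (by omega) h4, hX v (by omega)]
          by_cases h5 : v = a + h + 1
          · rw [h5, show a + h + k + 1 - (a + h + 1) = k by omega]
            exact pzn _ (by omega)
          · exact pxn _ (by omega) (by omega) _ (by omega) (by omega)
        · rw [hX u (by omega), hX v (by omega), G.adj_comm]
          exact xnon _ _ (by omega) (by omega)
  · intro u v huv hv
    by_cases h1 : u ≤ a
    · by_cases h2 : v ≤ a
      · rw [hY u h1, hY v h2]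
        exact yne _ _ (by omega) (by omega)
      · by_cases h3 : v ≤ a + h
        · by_cases h4 : u = a
          · rw [hP u (by omega) (by omega), hP v (by omega) h3]
            exact pne _ _ (by omega) (by omega)
          · rw [hY u h1, hP v (by omega) h3]
            exact (ypn _ (by omega) _ (by omega) (by omega)).2
        · rw [hY u h1, hX v (by omega)]
          exact yxe _ (by omega) (by omega) _ (by omega) (by omega)
    · by_cases h3 : v ≤ a + h
      · rw [hP u (by omega) (by omega), hP v (by omega) h3]
        exact pne _ _ (by omega) (by omega)
      · by_cases h4 : u ≤ a + h
        · rw [hP u (by omega) h4, hX v (by omega)]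
          exact pxe _ (by omega) (by omega) _ (by omega) (by omega)
        · rw [hX u (by omega), hX v (by omega)]
          exact (xne _ _ (by omega) (by omega)).symm
end cyc

section main
open scoped Classical
set_option linter.unusedSectionVars false
variable {α : Type*} [Fintype α] {G : SimpleGraph α}

/-- Two rounds of pigeonhole: targets of a common type. -/
lemma pigeon (Q : ℕ → Finset α) (idx : ℕ → α → ℕ) (hidx : ∀ a w, idx a w < 3) (M : ℕ) (θ : ℝ)
    (hQ : ∀ a, 1 ≤ a → a ≤ 3 * M → θ / 2 ≤ ((Q a).card : ℝ)) (hθ : 0 < θ) :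
    ∃ i < 3, ∃ φ : ℕ → ℕ, (∀ a < M, 1 ≤ φ a ∧ φ a ≤ 3 * M ∧
      θ / 6 ≤ (((Q (φ a)).filter (fun w => idx (φ a) w = i)).card : ℝ)) ∧
      ∀ a b, a < b → b < M → φ a < φ b := by
  have h1 : ∀ a, ∃ i < 3, 1 ≤ a → a ≤ 3 * M →
      θ / 6 ≤ (((Q a).filter (fun w => idx a w = i)).card : ℝ) := by
    intro a
    by_cases ha : 1 ≤ a ∧ a ≤ 3 * M
    · have h2 := hQ a ha.1 ha.2
      have h3 := Finset.card_eq_sum_card_fiberwise (s := Q a) (t := Finset.range 3) (f := idx a)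
        (fun w _ => by simpa using hidx a w)
      by_contra hcon
      push Not at hcon
      have q0 := (hcon 0 (by norm_num)).2.2
      have q1 := (hcon 1 (by norm_num)).2.2
      have q2 := (hcon 2 (by norm_num)).2.2
      simp only [Finset.sum_range_succ, Finset.sum_range_zero, zero_add] at h3
      rw [h3] at h2
      push_cast at h2
      linarith
    · exact ⟨0, by norm_num, fun h h' => absurd ⟨h, h'⟩ ha⟩
  choose ι hι3 hι using h1
  obtain ⟨i, hi, hcard⟩ := Finset.exists_le_card_fiber_of_mul_le_card_of_maps_to
    (s := Finset.Icc 1 (3 * M)) (t := Finset.range 3) (f := ι) (n := M)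
    (fun a _ => by simpa using hι3 a) ⟨0, by simp⟩ (by simp)
  obtain ⟨T, hT, hTc⟩ := Finset.exists_subset_card_eq hcard
  have hmem : ∀ a ∈ T, 1 ≤ a ∧ a ≤ 3 * M ∧ ι a = i := by
    intro a ha
    have := hT ha
    simp only [Finset.mem_filter, Finset.mem_Icc] at this
    tauto
  refine ⟨i, by simpa using hi,
    fun a => if h : a < M then T.orderEmbOfFin hTc ⟨a, h⟩ else 0, ?_, ?_⟩
  · intro a ha
    simp only [ha, dif_pos]
    obtain ⟨q1, q2, q3⟩ := hmem _ (T.orderEmbOfFin_mem hTc ⟨a, ha⟩)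
    exact ⟨q1, q2, q3 ▸ hι _ q1 q2⟩
  · intro a b hab hb
    simp only [hb, dif_pos, show a < M by omega]
    exact (T.orderEmbOfFin hTc).strictMono hab

lemma card_inter_sub (A B C : Finset α) :
    ((A ∩ B).card : ℝ) - ((C ∩ B).card : ℝ) ≤ (((A ∩ B) \ C).card : ℝ) := by
  have h : A ∩ B ⊆ ((A ∩ B) \ C) ∪ (C ∩ B) := by
    intro v hv
    simp only [Finset.mem_union, Finset.mem_sdiff, Finset.mem_inter] at *
    tauto
  have h2 : ((A ∩ B).card : ℝ) ≤ (((A ∩ B) \ C).card : ℝ) + ((C ∩ B).card : ℝ) := by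
    exact_mod_cast (Finset.card_le_card h).trans (Finset.card_union_le _ _)
  linarith

lemma card_sub_le (A C : Finset α) : (A.card : ℝ) - (C.card : ℝ) ≤ ((A \ C).card : ℝ) := by
  have h : A ⊆ (A \ C) ∪ C := by
    intro v hv
    simp only [Finset.mem_union, Finset.mem_sdiff]
    tauto
  have h2 : (A.card : ℝ) ≤ ((A \ C).card : ℝ) + (C.card : ℝ) := by
    exact_mod_cast (Finset.card_le_card h).trans (Finset.card_union_le _ _)
  linarith

set_option maxHeartbeats 4000000 in
lemma Setup.main {m : ℕ} {γ e t : ℝ} (S : Setup G m γ e t) (h1e : 1 ≤ e) (ℓ M : ℕ)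
    (hℓ : 3 * m + 3 ≤ ℓ) (hM : M = (m + 1) ^ ℓ) (A N0 : ℝ) (hA : A = 3 * M + 2)
    (hN0 : N0 = 16 * A * m)
    (hsm : 120 * A * N0 ^ m * (ℓ + 2) * e ≤ (Fintype.card α : ℝ)) :
    Nonempty (cycleGraph ℓ ↪g G) := by
  have hγe := S.hγe
  have hγ := S.hγ
  have ht := S.ht
  have hm := S.hm
  have hmR : (1 : ℝ) ≤ m := by exact_mod_cast hm
  have hMR : (0 : ℝ) ≤ M := by positivity
  have hA2 : 2 ≤ A := by linarith
  have hN16 : 32 ≤ N0 := by rw [hN0]; nlinarith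
  have hNm : 1 ≤ N0 ^ m := one_le_pow₀ (by linarith)
  have hmℓ : 3 * (m : ℝ) + 3 ≤ ℓ := by exact_mod_cast hℓ
  have hANm : 2 * N0 ^ m ≤ A * N0 ^ m := by nlinarith
  have hle : 5 ≤ ((ℓ : ℝ) + 2) * e := by nlinarith
  have hmain : A * N0 ^ m * (120 * ((ℓ + 2) * e)) ≤ (Fintype.card α : ℝ) := by
    calc A * N0 ^ m * (120 * ((ℓ + 2) * e)) = 120 * A * N0 ^ m * (ℓ + 2) * e := by ring
      _ ≤ _ := hsm
  have hb1 : 240 * ((ℓ + 2) * e) ≤ (Fintype.card α : ℝ) := by nlinarith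
  have hb2 : 6 * N0 ^ m * e ≤ (Fintype.card α : ℝ) := by
    have : 6 * e ≤ 120 * ((ℓ + 2) * e) := by nlinarith
    nlinarith
  have hb3 : (2 * m + 3) * e ≤ ((ℓ : ℝ) + 2) * e := by
    apply mul_le_mul_of_nonneg_right _ (by linarith)
    linarith
  have hb4 : 5 * e ≤ (2 * m + 3) * e := by
    apply mul_le_mul_of_nonneg_right _ (by linarith)
    linarith
  obtain ⟨k, s, η, hk2, hkm, hη1, hη2, hη3, hη4⟩ :=
    S.part0 h1e N0 (by linarith) (by linarith) hb2
  set n : ℝ := (Fintype.card α : ℝ) with hn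
  have hη5 : 60 * A * ((ℓ + 2) * e) ≤ η := by
    have h1 : N0 ^ m * (60 * A * ((ℓ + 2) * e)) ≤ N0 ^ m * η := by nlinarith
    exact le_of_mul_le_mul_left h1 (by linarith)
  set θ := η / (2 * A) with hθ
  have hθη : 2 * A * θ = η := by rw [hθ]; field_simp
  have hθ1 : 30 * ((ℓ + 2) * e) ≤ θ := by
    rw [hθ, le_div_iff₀ (by linarith)]
    linarith
  have hθe : 150 * e ≤ θ := by linarith
  have hθ0 : 0 < θ := by linarith
  have hη0 : 0 < η := by rw [← hθη]; positivity
  -- the small ball and what lies beyond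
  set P := bl G s (k - 1) with hP
  set R := Finset.univ \ P with hR
  have hPc : (P.card : ℝ) * 32 ≤ η := by
    have := hη4 s
    have h0 : (0 : ℝ) ≤ P.card := by positivity
    nlinarith
  have hcovP : η / 2 ≤ ((nb G P ∩ R).card : ℝ) := by
    have h1 : bl G s k ⊆ P ∪ (nb G P ∩ R) := by
      intro v hv
      rw [show k = k - 1 + 1 by omega] at hv
      simp only [bl, ← hP, hR, Finset.mem_union, Finset.mem_inter, Finset.mem_sdiff,
        Finset.mem_univ, true_and] at hv ⊢
      tauto
    have h2 : ((bl G s k).card : ℝ) ≤ P.card + ((nb G P ∩ R).card : ℝ) := by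
      exact_mod_cast (Finset.card_le_card h1).trans (Finset.card_union_le _ _)
    linarith
  obtain ⟨F, hF, hFmono⟩ := cover_chain (G := G) e θ S.hs R P (by linarith) (by linarith)
    (3 * M + 1) (by push_cast; nlinarith)
  let Q : ℕ → Finset α := fun a => (nb G (F (a + 1)) ∩ R) \ nb G (F a)
  have hQc : ∀ a ≤ 3 * M, θ - e ≤ ((Q a).card : ℝ) := by
    intro a ha
    have h1 := (hF (a + 1) (by omega)).2.1
    have h2 := (hF a (by omega)).2.2
    have h3 := card_inter_sub (nb G (F (a + 1))) R (nb G (F a))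
    push_cast at h1
    simp only [Q]
    linarith
  set Z := R \ nb G (F (3 * M + 1)) with hZ
  have hZc : n / 4 ≤ (Z.card : ℝ) := by
    have h1 := (hF (3 * M + 1) le_rfl).2.2
    push_cast at h1
    have h2 : Finset.univ ⊆ P ∪ ((nb G (F (3 * M + 1)) ∩ R) ∪ Z) := by
      intro v _
      simp only [hZ, hR, Finset.mem_union, Finset.mem_inter, Finset.mem_sdiff,
        Finset.mem_univ, true_and]
      tauto
    have h3 : n ≤ P.card + (((nb G (F (3 * M + 1)) ∩ R).card : ℝ) + Z.card) := by
      rw [hn, ← Finset.card_univ]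
      exact_mod_cast (Finset.card_le_card h2).trans ((Finset.card_union_le _ _).trans
        (Nat.add_le_add_left (Finset.card_union_le _ _) _))
    have h4 : (3 * (M : ℝ) + 1) * θ ≤ η / 2 := by rw [← hθη, hA]; nlinarith
    linarith
  -- cleaning
  obtain ⟨X, -, hXc, hX⟩ := cleaning (G := G) m γ e t (n / 4) hγ (by linarith) S.hte
    hγe S.hco (Q 0 ∪ Z) Z hZc (by linarith)
  obtain ⟨y, hyQ, hyX⟩ : ∃ y ∈ Q 0, y ∉ X := by
    by_contra hcon
    push Not at hcon
    have h1 : ((Q 0).card : ℝ) ≤ X.card := by exact_mod_cast Finset.card_le_card hcon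
    have h2 := hQc 0 (by omega)
    linarith
  obtain ⟨d, hd, hreach⟩ := S.growth (Q 0 ∪ Z) Z X Finset.subset_union_right hX y
    (Finset.mem_sdiff.mpr ⟨Finset.mem_union_left _ hyQ, hyX⟩)
  -- geodesics
  have hgeo : ∀ a u, ∃ p : ℕ → α, a ≤ 3 * M → u ∈ Q a →
      Geo G s k p ∧ p k = u ∧ p (k - 1) ∈ F (a + 1) := by
    intro a u
    by_cases h : a ≤ 3 * M ∧ u ∈ Q a
    · obtain ⟨ha, hu⟩ := h
      simp only [Q, hR, Finset.mem_sdiff, Finset.mem_inter, Finset.mem_univ, true_and] at hu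
      obtain ⟨f, hf, hfu⟩ := mem_nb.mp hu.1.1
      obtain ⟨p, p0, p1, p2, p3⟩ := bl_geo (by omega) ((hF (a + 1) (by omega)).1 hf) hfu hu.1.2
      exact ⟨p, fun _ _ => ⟨⟨p0, p3, by rw [p2]; exact hu.1.2⟩, p2, by rw [p1]; exact hf⟩⟩
    · exact ⟨fun _ => u, fun h1 h2 => absurd ⟨h1, h2⟩ h⟩
  choose x hx using hgeo
  obtain ⟨hyG, hyk, hyF⟩ := hx 0 y (by omega) hyQ
  set Y := x 0 y with hY
  -- conflicts
  let C : Finset α := (Finset.Icc 1 k).biUnion (fun j => bl G (Y j) (k - 1))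
  have hCc : (C.card : ℝ) ≤ θ / 8 := by
    have h1 : C.card ≤ ∑ j ∈ Finset.Icc 1 k, (bl G (Y j) (k - 1)).card := Finset.card_biUnion_le
    have h2 : (C.card : ℝ) ≤ ∑ j ∈ Finset.Icc 1 k, ((bl G (Y j) (k - 1)).card : ℝ) := by
      exact_mod_cast h1
    have h3 : ∑ j ∈ Finset.Icc 1 k, ((bl G (Y j) (k - 1)).card : ℝ) ≤
        ∑ j ∈ Finset.Icc 1 k, η / N0 := by
      apply Finset.sum_le_sum
      intro j _
      rw [le_div_iff₀ (by linarith)]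
      exact hη4 _
    have h4 : ∑ j ∈ Finset.Icc 1 k, η / N0 = k * (η / N0) := by simp
    have h5 : (k : ℝ) * (η / N0) ≤ m * (η / N0) := by
      apply mul_le_mul_of_nonneg_right _ (by positivity)
      exact_mod_cast hkm
    have h6 : (m : ℝ) * (η / N0) = θ / 8 := by
      rw [hN0, ← hθη]
      field_simp
      norm_num
    linarith
  let idx : ℕ → α → ℕ := fun a w => if G.Adj (Y 2) (x a w 1) then 2 else
    if G.Adj (Y 1) (x a w 1) then 1 else 0
  obtain ⟨i, hi3, φ, hφ, hφmono⟩ := pigeon (fun a => Q a \ C) idx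
    (by intro a w; simp only [idx]; split_ifs <;> norm_num) M θ (by
      intro a _ ha
      have h1 := hQc a ha
      have h2 := card_sub_le (Q a) C
      linarith) hθ0
  let Wc : ℕ → Finset α := fun a => (Q (φ a) \ C).filter (fun w => idx (φ a) w = i)
  -- the path
  set h := ℓ - 2 * k - 1 + i with hh
  have hhM : (m + 1) ^ h ≤ M := by rw [hM]; exact Nat.pow_le_pow_right (by omega) (by omega)
  have hQF : ∀ a b u, u ∈ Q b → a ≤ b → b ≤ 3 * M → u ∉ nb G (F a) := by
    intro a b u hu hab hb hcon
    exact (Finset.mem_sdiff.mp hu).2 (nb_mono (hFmono a b hab (by omega)) hcon)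
  have hQnb : ∀ b u, u ∈ Q b → u ∈ nb G (F (b + 1)) := by
    intro b u hu
    exact (Finset.mem_inter.mp (Finset.mem_sdiff.mp hu).1).1
  have hQR : ∀ b u, u ∈ Q b → u ∉ P := by
    intro b u hu
    exact (Finset.mem_sdiff.mp (Finset.mem_inter.mp (Finset.mem_sdiff.mp hu).1).2).2
  have hWQ : ∀ a u, u ∈ Wc a → u ∈ Q (φ a) ∧ u ∉ C ∧ idx (φ a) u = i := by
    intro a u hu
    simp only [Wc, Finset.mem_filter, Finset.mem_sdiff] at hu
    tauto
  have hconcl := S.start y d h 0 0 {y} ((Z \ X) \ {y}) {y} Wc (by omega) hreach (by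
      rw [Set.disjoint_singleton_left]
      rintro (h1 | ⟨a, -, h1, h2⟩)
      · simp at h1
      · have h3 := hφ a (by omega)
        exact hQF 1 (φ a) y (hWQ a y h2).1 h3.1 h3.2.1 (hQnb 0 y hyQ)) (by
      intro a _ h1
      have h2 := (hφ a (by omega)).2.2
      have h3 : (h : ℝ) ≤ ℓ := by
        have : h ≤ ℓ := by omega
        exact_mod_cast this
      have h4 : ((h : ℝ) + 2) * (5 * e) ≤ (ℓ + 2) * (5 * e) := by
        apply mul_le_mul_of_nonneg_right _ (by linarith)
        linarith
      refine le_trans ?_ h2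
      linarith) (by
      intro β hβ
      have hβ : β = y := by simpa using hβ
      subst hβ
      refine ⟨fun _ => β, rfl, rfl, by simp, ?_, ?_, by simp, by simp⟩
      · intro g g' h1 h2; omega
      · intro g g' h1 h2; omega)
  simp only [Nat.zero_add] at hconcl
  obtain ⟨a, -, ha, p, z, p0, padj, pnon, pne, pmem, hz, pz, pzn⟩ := hconcl
  have haM : a < M := by omega
  obtain ⟨hφ1, hφ3, -⟩ := hφ a haM
  obtain ⟨hzQ, hzC, hzi⟩ := hWQ a z hz
  obtain ⟨hxG, hxk, hxF⟩ := hx (φ a) z hφ3 hzQ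
  have hpfact : ∀ g, 1 ≤ g → g ≤ h → p g ∉ P ∧ p g ∉ nb G (F 1) ∧ p g ∉ nb G (F (φ a + 1)) := by
    intro g hg1 hgh
    rcases pmem g hgh with (hp | hp) | ⟨b, hb1, hb2, hb3⟩
    · exfalso
      have hp : p g = y := hp
      exact pne 0 g (by omega) hgh (by rw [p0, hp])
    · have hpZ : p g ∈ Z := (Finset.mem_sdiff.mp (Finset.mem_sdiff.mp hp).1).1
      simp only [hZ, hR, Finset.mem_sdiff, Finset.mem_univ, true_and] at hpZ
      exact ⟨hpZ.1, fun hc => hpZ.2 (nb_mono (hFmono _ _ (by omega) le_rfl) hc),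
        fun hc => hpZ.2 (nb_mono (hFmono _ _ (by omega) le_rfl) hc)⟩
    · have hpQ := (hWQ b _ hb3).1
      have hbφ := hφ b (by omega)
      have := hφmono a b hb1 (by omega)
      exact ⟨hQR _ _ hpQ, hQF _ _ _ hpQ hbφ.1 hbφ.2.1, hQF _ _ _ hpQ (by omega) hbφ.2.1⟩
  set x' := x (φ a) z with hx'
  have hconf : ∀ j, 1 ≤ j → j ≤ k → z ∉ bl G (Y j) (k - 1) := by
    intro j h1 h2 h3
    exact hzC (Finset.mem_biUnion.mpr ⟨j, Finset.mem_Icc.mpr ⟨h1, h2⟩, h3⟩)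
  have hxz : ∀ l ≤ k, z ∈ bl G (x' l) (k - l) := by
    intro l hl
    have := bl_path hxG.adj (l := l) (d := k - l) (by omega)
    rwa [show l + (k - l) = k by omega, hxk] at this
  have hidx : i ≤ 2 ∧ G.Adj (Y i) (x' 1) ∧ ∀ j, i < j → j ≤ 2 → ¬ G.Adj (Y j) (x' 1) := by
    simp only [idx, ← hx'] at hzi
    split_ifs at hzi with q1 q2
    · subst hzi
      exact ⟨le_rfl, q1, fun j h1 h2 => by omega⟩
    · subst hzi
      refine ⟨by omega, q2, fun j h1 h2 => ?_⟩
      have : j = 2 := by omega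
      subst this
      exact q1
    · subst hzi
      refine ⟨by omega, ?_, fun j h1 h2 => ?_⟩
      · rw [hyG.h0, ← hxG.h0]
        exact hxG.adj 0 (by omega)
      · have : j = 1 ∨ j = 2 := by omega
        rcases this with rfl | rfl
        · exact q2
        · exact q1
  obtain ⟨hi2, hiadj, hinon⟩ := hidx
  have hlen : ℓ = k - i + h + k + 1 := by omega
  -- a vertex of a geodesic with last-but-one vertex in some `F b`
  have hcross : ∀ (q : ℕ → α) (b g : ℕ), Geo G s k q → q (k - 1) ∈ F b → p g ∉ P →
      p g ∉ nb G (F b) → ∀ l < k, ¬ G.Adj (q l) (p g) ∧ q l ≠ p g := by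
    intro q b g hq hqF hpP hpF l hl
    refine ⟨fun hadj => ?_, fun heq => ?_⟩
    · by_cases hlk : l = k - 1
      · subst hlk
        exact hpF (mem_nb.mpr ⟨_, hqF, hadj⟩)
      · exact hpP (bl_mono s (by omega) (bl_adj (hq.mem (by omega)) hadj))
    · exact hpP (heq ▸ bl_mono s (by omega) (hq.mem (by omega)))
  rw [hlen]
  refine cycle_three k i h (by omega) (by omega) (by omega) Y p x' hyG.adj
    (fun g g' h1 h2 => hyG.nonadj h1 h2) (fun g g' h1 h2 => hyG.ne h1 h2) hxG.adj
    (fun g g' h1 h2 => hxG.nonadj h1 h2) (fun g g' h1 h2 => hxG.ne h1 h2) (by rw [p0, hyk])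
    padj pnon pne (by rw [hxk]; exact pz) (by rw [hxk]; exact pzn) ?_ ?_ ?_ hiadj ?_ ?_ (by omega)
  · intro j hj g h1 h2
    obtain ⟨f1, f2, f3⟩ := hpfact g h1 h2
    exact hcross Y 1 g hyG hyF f1 f2 j hj
  · intro g h1 h2 l _ hl hadj
    obtain ⟨f1, f2, f3⟩ := hpfact g h1 h2
    exact (hcross x' (φ a + 1) g hxG hxF f1 f3 l hl).1 hadj.symm
  · intro g h1 h2 l _ hl heq
    obtain ⟨f1, f2, f3⟩ := hpfact g h1 h2
    by_cases hlk : l = k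
    · subst hlk
      rw [hxk] at heq
      exact f3 (heq ▸ hQnb _ _ hzQ)
    · exact (hcross x' (φ a + 1) g hxG hxF f1 f3 l (by omega)).2 heq.symm
  · intro j hij hjk l hl1 hlk hex hadj
    by_cases hj0 : j = 0
    · subst hj0
      rw [hyG.h0, ← hxG.h0] at hadj
      exact hxG.nonadj (by omega) hlk hadj
    · by_cases hl : l = 1
      · subst hl
        by_cases hj2 : j ≤ 2
        · exact hinon j (by omega) hj2 hadj
        · exact hyG.not_mem hjk (i := 2) (by omega) (bl_adj (hxG.mem (by omega)) hadj.symm)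
      · exact hconf j (by omega) hjk (bl_mono _ (by omega) (bl_front hadj (hxz l hlk)))
  · intro j hij hjk l hl1 hlk heq
    by_cases hj0 : j = 0
    · subst hj0
      rw [hyG.h0, ← hxG.h0] at heq
      exact hxG.ne (by omega) hlk heq
    · exact hconf j (by omega) hjk (heq ▸ bl_mono _ (by omega) (hxz l hlk))

end main

/-- if `1/c` is an integer and `ℓ ≥ 3/c + 3`, there is `ε > 0` such
that every `ε`-sparse `(ε|G|^{1-c}, ε|G|)`-coherent graph `G` with `|G| > 1` has an
induced cycle of length `ℓ`. -/
theorem statement_16 (c : ℝ) (hc : 0 < c) (hcint : ∃ m : ℤ, 1/c = (m : ℝ))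
    (ℓ : ℕ) (hℓ : 3/c + 3 ≤ (ℓ : ℝ)) :
    ∃ ε : ℝ, 0 < ε ∧ ∀ {V : Type} [Fintype V] (G : SimpleGraph V),
      1 < Fintype.card V → EpsSparse G ε →
      Coherent G (ε * (Fintype.card V : ℝ) ^ (1 - c)) (ε * (Fintype.card V : ℝ)) →
      Contains G (SimpleGraph.cycleGraph ℓ) := by
  classical
  obtain ⟨m0, hm0⟩ := hcint
  have hm0pos : 0 < m0 := by
    have : (0 : ℝ) < m0 := by rw [← hm0]; positivity
    exact_mod_cast this
  obtain ⟨m, rfl⟩ : ∃ m : ℕ, m0 = (m : ℤ) := ⟨m0.toNat, by omega⟩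
  have hm1 : 1 ≤ m := by omega
  have hmR : (1 : ℝ) ≤ m := by exact_mod_cast hm1
  have hcm : 1 / c = (m : ℝ) := by rw [hm0]; simp
  have hcm' : c * m = 1 := by rw [← hcm]; field_simp
  have hℓm : 3 * m + 3 ≤ ℓ := by
    have h1 : 3 / c = 3 * (m : ℝ) := by rw [← hcm]; ring
    rw [h1] at hℓ
    exact_mod_cast hℓ
  obtain ⟨M, hM⟩ : ∃ M : ℕ, M = (m + 1) ^ ℓ := ⟨_, rfl⟩
  obtain ⟨A, hA⟩ : ∃ A : ℝ, A = 3 * M + 2 := ⟨_, rfl⟩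
  obtain ⟨N0, hN0⟩ : ∃ N0 : ℝ, N0 = 16 * A * m := ⟨_, rfl⟩
  have hA2 : 2 ≤ A := by
    have : (0 : ℝ) ≤ M := by positivity
    linarith
  have hN1 : 1 ≤ N0 := by rw [hN0]; nlinarith
  have hNm : 1 ≤ N0 ^ m := one_le_pow₀ hN1
  have hD1 : 1 ≤ 120 * A * N0 ^ m * ((ℓ : ℝ) + 2) := by
    have h1 : (1 : ℝ) ≤ (ℓ : ℝ) + 2 := by
      have : (0 : ℝ) ≤ ℓ := by positivity
      linarith
    have h2 : 1 ≤ 120 * A := by linarith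
    exact one_le_mul_of_one_le_of_one_le (one_le_mul_of_one_le_of_one_le h2 hNm) h1
  obtain ⟨ε, hε⟩ : ∃ ε : ℝ, ε = 1 / (120 * A * N0 ^ m * ((ℓ : ℝ) + 2)) := ⟨_, rfl⟩
  have hε0 : 0 < ε := by rw [hε]; positivity
  have hε1 : ε ≤ 1 := by
    rw [hε, div_le_iff₀ (by linarith)]
    linarith
  have hDε : 120 * A * N0 ^ m * ((ℓ : ℝ) + 2) * ε = 1 := by
    rw [hε]
    field_simp
  refine ⟨ε, hε0, ?_⟩
  intro V _ G hV hsp hcoh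
  have hnR : (1 : ℝ) < (Fintype.card V : ℝ) := by exact_mod_cast hV
  have hn0 : (0 : ℝ) < (Fintype.card V : ℝ) := by linarith
  have hsum : (Fintype.card V : ℝ) ^ c * (Fintype.card V : ℝ) ^ (1 - c) = Fintype.card V := by
    rw [← Real.rpow_add hn0]
    simp
  have htm : ((Fintype.card V : ℝ) ^ c) ^ m = Fintype.card V := by
    rw [← Real.rpow_mul_natCast hn0.le, hcm', Real.rpow_one]
  have htm1 : ((Fintype.card V : ℝ) ^ c) ^ (m - 1) = (Fintype.card V : ℝ) ^ (1 - c) := by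
    rw [← Real.rpow_mul_natCast hn0.le]
    congr 1
    rw [Nat.cast_sub hm1, mul_sub, hcm']
    simp
  have hnc : 0 < (Fintype.card V : ℝ) ^ (1 - c) := Real.rpow_pos_of_pos hn0 _
  have hco : ∀ A B : Finset V, Disjoint A B → (∀ a ∈ A, ∀ b ∈ B, ¬ G.Adj a b) →
      ε * (Fintype.card V : ℝ) ^ (1 - c) ≤ (A.card : ℝ) →
      (B.card : ℝ) < ε * Fintype.card V := by
    intro A B hd hnon hA'
    by_contra hcon
    push Not at hcon
    apply hcoh
    refine ⟨A, B, by exact_mod_cast hd, ?_, by simpa using hA', by simpa using hcon⟩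
    intro a ha b hb
    exact hnon a (by simpa using ha) b (by simpa using hb)
  have hnbeq : ∀ v, ((nb G {v}).card : ℝ) = ((G.neighborSet v).ncard : ℝ) := by
    intro v
    have : G.neighborSet v = ((nb G {v} : Finset V) : Set V) := by
      ext u
      simp [mem_nb]
    rw [this, Set.ncard_coe_finset]
  have hs : ∀ v, ((nb G {v}).card : ℝ) < ε * Fintype.card V := by
    intro v
    rw [hnbeq]
    exact hsp v
  have ht1 : 1 ≤ (Fintype.card V : ℝ) ^ c := Real.one_le_rpow hnR.le hc.le
  have S : Setup G m (ε * (Fintype.card V : ℝ) ^ (1 - c)) (ε * Fintype.card V)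
      ((Fintype.card V : ℝ) ^ c) :=
    { hγ := by positivity
      ht := ht1
      hte := by rw [← mul_assoc, mul_comm _ ε, mul_assoc, hsum]
      htm := htm
      hm := hm1
      hn := by omega
      hco := hco
      hs := fun v => (hs v).le
      hγt := by rw [htm1]; nlinarith }
  have h1e : 1 ≤ ε * Fintype.card V := by
    by_contra hcon
    push Not at hcon
    obtain ⟨v⟩ : Nonempty V := Fintype.card_pos_iff.mp (by omega)
    have hno : ∀ u, ¬ G.Adj v u := by
      intro u hu
      have h1 : 0 < (nb G {v}).card := Finset.card_pos.mpr ⟨u, mem_nb.mpr ⟨v, by simp, hu⟩⟩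
      have h2 : (1 : ℝ) ≤ (nb G {v}).card := by exact_mod_cast h1
      have := hs v
      linarith
    have h1 := hco {v} (Finset.univ.erase v) (by simp) (by
      intro a ha b _
      have : a = v := by simpa using ha
      rw [this]
      exact hno b) (by
      have := S.hγe
      simp
      linarith)
    rw [Finset.card_erase_of_mem (Finset.mem_univ v), Finset.card_univ] at h1
    have h2 : (1 : ℝ) ≤ ((Fintype.card V - 1 : ℕ) : ℝ) := by
      have : 1 ≤ Fintype.card V - 1 := by omega
      exact_mod_cast this
    linarith
  refine S.main h1e ℓ M hℓm hM A N0 hA hN0 ?_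
  rw [← mul_assoc, hDε, one_mul]

end PurePairs
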